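/- arXiv:2106.01853 — 2 statements merged into one kernel-verified Lean document; each statement's English description precedes it below -/
import Mathlib

section
/- Let n ∈ ℕ and let G be a closed subgroup of GL_n(ℚ̄) that is defined over ℚ, i.e. G = V(I) for some set I of polynomials with rational coefficients. Let U := Zcl(⟨{g ∈ G : g is unipotent}⟩) be the Zariski closure of the subgroup of G generated by the unipotent elements of G. Then U is a normal subgroup of G and U is (n³+1)^{2^{3n²}}-bounded over ℚ. -/
noncomputable section

open scoped MatrixGroups
open MvPolynomial

/-- The field of algebraic numbers. -/
abbrev Qbar : Type := AlgebraicClosure ℚ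

/-- The zero set `V(I)` of a set `I` of multivariate polynomials over `ℚ̄`. -/
def zeroSet {σ : Type} (I : Set (MvPolynomial σ Qbar)) : Set (σ → Qbar) :=
  {a | ∀ f ∈ I, MvPolynomial.eval a f = 0}

/-- A subset of affine space over `ℚ̄` is an algebraic set if it is a zero set. -/
def IsAlgebraicSet {σ : Type} (X : Set (σ → Qbar)) : Prop :=
  ∃ I : Set (MvPolynomial σ Qbar), X = zeroSet I

/-- The Zariski closure: the smallest algebraic set containing `Y`. -/
def zariskiClosure {σ : Type} (Y : Set (σ → Qbar)) : Set (σ → Qbar) :=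
  zeroSet {f : MvPolynomial σ Qbar | ∀ a ∈ Y, MvPolynomial.eval a f = 0}

/-- `X` is `d`-bounded over `ℚ`: it is the zero set of a set of polynomials of total
degree at most `d` with rational coefficients. -/
def BoundedOverQ {σ : Type} (X : Set (σ → Qbar)) (d : ℕ) : Prop :=
  ∃ I : Set (MvPolynomial σ Qbar), X = zeroSet I ∧
    ∀ f ∈ I, f.totalDegree ≤ d ∧ ∀ m, f.coeff m ∈ Set.range (algebraMap ℚ Qbar)

/-- Coordinates for the affine space `ℚ̄^{n²+1}` in which `GL_n(ℚ̄)` is embedded. -/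
abbrev glIdx (n : ℕ) : Type := (Fin n × Fin n) ⊕ Unit

/-- The point `(M, det(M)⁻¹)` of `ℚ̄^{n²+1}` associated to `g ∈ GL_n(ℚ̄)`. -/
def glPoint {n : ℕ} (g : GL (Fin n) Qbar) : glIdx n → Qbar :=
  Sum.elim (fun p => (g : Matrix (Fin n) (Fin n) Qbar) p.1 p.2)
    (fun _ => ((g : Matrix (Fin n) (Fin n) Qbar).det)⁻¹)

/-- The matrix part of a point of `ℚ̄^{n²+1}`. -/
def pointMatrix {n : ℕ} (a : glIdx n → Qbar) : Matrix (Fin n) (Fin n) Qbar :=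
  Matrix.of fun i j => a (Sum.inl (i, j))

/-- The height of a rational number `a/b` in lowest terms is `max |a| b`. -/
def ratHeight (q : ℚ) : ℕ := max q.num.natAbs q.den

/-- `g` has rational entries, i.e. `g ∈ GL_n(ℚ)`. -/
def HasRatEntries {n : ℕ} (g : GL (Fin n) Qbar) : Prop :=
  ∀ i j, ∃ q : ℚ, (g : Matrix (Fin n) (Fin n) Qbar) i j = algebraMap ℚ Qbar q

/-- `g` has rational entries of height at most `h`. -/
def EntriesHeightLE {n : ℕ} (g : GL (Fin n) Qbar) (h : ℕ) : Prop :=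
  ∀ i j, ∃ q : ℚ, (g : Matrix (Fin n) (Fin n) Qbar) i j = algebraMap ℚ Qbar q ∧ ratHeight q ≤ h

/-- A matrix `g` is unipotent if `(g - 1)^n = 0`. -/
def IsUnipotent {n : ℕ} (g : GL (Fin n) Qbar) : Prop :=
  ((g : Matrix (Fin n) (Fin n) Qbar) - 1) ^ n = 0

/-- A matrix is semisimple if it is diagonalizable over `ℚ̄`. -/
def IsSemisimpleMat {n : ℕ} (M : Matrix (Fin n) (Fin n) Qbar) : Prop :=
  ∃ (P : GL (Fin n) Qbar) (dvec : Fin n → Qbar),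
    M = (P : Matrix (Fin n) (Fin n) Qbar) * Matrix.diagonal dvec *
      ((P⁻¹ : GL (Fin n) Qbar) : Matrix (Fin n) (Fin n) Qbar)

/-- Iterated base-2 exponentiation: `iexp 0 x = x`, `iexp (k+1) x = 2 ^ iexp k x`. -/
def iexp : ℕ → ℕ → ℕ
  | 0, x => x
  | k + 1, x => 2 ^ iexp k x


/-- `X` is defined over `ℚ`: it is the zero set of a set of polynomials with rational
coefficients. -/
def DefinedOverQ {σ : Type} (X : Set (σ → Qbar)) : Prop :=
  ∃ I : Set (MvPolynomial σ Qbar), X = zeroSet I ∧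
    ∀ f ∈ I, ∀ m, f.coeff m ∈ Set.range (algebraMap ℚ Qbar)

/-!
If `u` is unipotent, the entries of `u ^ t` are polynomials in `t` of degree less than `n`. If the
Zariski closure of the products of powers `u₁ ^ t₁ ⋯ uₘ ^ tₘ` of given unipotent elements of `G` has
dimension `m`, then `m ≤ n ^ 2`. When `m` is maximal, appending a further power does not enlarge
this closure, which is therefore equal to `U`. So `U` is the closure of the image of an affine space
under a polynomial map of small degree.

Given a point outside the closure of such an image, a generic linear projection to a space of
dimension `m + 1` turns the closure into a hypersurface which still misses the point. The equation
of this hypersurface divides every other relation, and comparing the dimensions of two spaces of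
polynomials yields a relation of small degree. Hence `U` is cut out by equations of small degree.
Since `G` is defined over `ℚ`, the ideal of `U` is stable under the Galois group, and an element of
minimal support in a stable space of polynomials is proportional to a rational one. This makes the
equations rational without enlarging their supports.
-/

section LinearSubstitution

lemma coeff_finset_prod_of_natDegree_le {R ι : Type*} [CommSemiring R] (s : Finset ι)
    (P : ι → Polynomial R) (d : ι → ℕ) (hP : ∀ i ∈ s, (P i).natDegree ≤ d i) :
    (∏ i ∈ s, P i).coeff (∑ i ∈ s, d i) = ∏ i ∈ s, (P i).coeff (d i) := by
  classical
  induction s using Finset.induction_on with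
  | empty => simp
  | insert i s hi ih =>
    have hs : ∀ j ∈ s, (P j).natDegree ≤ d j := fun j hj => hP j (Finset.mem_insert_of_mem hj)
    rw [Finset.prod_insert hi, Finset.sum_insert hi, Finset.prod_insert hi,
      Polynomial.coeff_mul_add_eq_of_natDegree_le (hP i (Finset.mem_insert_self i s)), ih hs]
    exact (Polynomial.natDegree_prod_le _ _).trans (Finset.sum_le_sum hs)

variable {k R ι : Type*} [CommSemiring k] [CommSemiring R] [Algebra k R]

lemma natDegree_aeval_le_totalDegree {L : ι → Polynomial R} (hL : ∀ i, (L i).natDegree ≤ 1)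
    (F : MvPolynomial ι k) : (aeval L F).natDegree ≤ F.totalDegree := by
  rw [← aeval_map_algebraMap R L F, ← mul_one F.totalDegree]
  exact aeval_natDegree_le _ (Finset.sup_mono (support_map_subset _ _)) L hL

lemma coeff_degree_aeval_monomial {L : ι → Polynomial R} (hL : ∀ i, (L i).natDegree ≤ 1)
    (m : ι →₀ ℕ) (c : k) :
    (aeval L (monomial m c)).coeff m.degree = aeval (fun i => (L i).coeff 1) (monomial m c) := by
  have hpow : ∀ i, (L i ^ m i).natDegree ≤ m i := fun i => by
    simpa using Polynomial.natDegree_pow_le_of_le (m i) (hL i)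
  have hcoeff : ∀ i, (L i ^ m i).coeff (m i) = (L i).coeff 1 ^ m i := fun i => by
    simpa using Polynomial.coeff_pow_of_natDegree_le (m := m i) (hL i)
  rw [aeval_monomial, aeval_monomial, Polynomial.algebraMap_apply, Polynomial.coeff_C_mul,
    Finsupp.prod, Finsupp.prod, Finsupp.degree_apply,
    coeff_finset_prod_of_natDegree_le _ _ _ fun i _ => hpow i]
  simp only [hcoeff]

lemma coeff_aeval_of_natDegree_le_one {L : ι → Polynomial R} (hL : ∀ i, (L i).natDegree ≤ 1)
    {F : MvPolynomial ι k} {d : ℕ} (hF : F.totalDegree ≤ d) :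
    (aeval L F).coeff d = aeval (fun i => (L i).coeff 1) (homogeneousComponent d F) := by
  conv_lhs => rw [F.as_sum]
  rw [homogeneousComponent_apply, map_sum, map_sum, Polynomial.finsetSum_coeff, Finset.sum_filter]
  refine Finset.sum_congr rfl fun m hm => ?_
  have hmd : m.degree ≤ d := (le_totalDegree hm).trans hF
  split_ifs with h
  · rw [← h, coeff_degree_aeval_monomial hL]
  · exact Polynomial.coeff_eq_zero_of_natDegree_lt (((natDegree_aeval_le_totalDegree hL _).trans
      (totalDegree_monomial_le m _)).trans_lt (hmd.lt_of_ne h))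

end LinearSubstitution

section HomogeneousForms

lemma homogeneousComponent_totalDegree_ne_zero {k ι : Type*} [CommSemiring k]
    {F : MvPolynomial ι k} (hF : F ≠ 0) : homogeneousComponent F.totalDegree F ≠ 0 := by
  obtain ⟨m, hm, hdeg⟩ := Finset.exists_mem_eq_sup F.support (support_nonempty.2 hF) Finsupp.degree
  have hcoeff : coeff m (homogeneousComponent F.totalDegree F) = coeff m F := by
    rw [coeff_homogeneousComponent, if_pos]
    exact hdeg.symm
  intro h
  rw [h, coeff_zero] at hcoeff
  exact mem_support_iff.1 hm hcoeff.symm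

lemma totalDegree_ne_zero_of_aeval_eq_zero {k A ι : Type*} [Field k] [CommRing A] [Nontrivial A]
    [Algebra k A] {z : ι → A} {F : MvPolynomial ι k} (hF : F ≠ 0) (hz : aeval z F = 0) :
    F.totalDegree ≠ 0 := by
  intro h
  rw [totalDegree_eq_zero_iff_eq_C] at h
  rw [h, aeval_C, map_eq_zero] at hz
  exact hF (by rw [h, hz, C_0])

lemma aeval_smul_of_isHomogeneous {k A ι : Type*} [CommSemiring k] [CommSemiring A] [Algebra k A]
    {F : MvPolynomial ι k} {d : ℕ} (hF : F.IsHomogeneous d) (v : ι → k) (t : A) :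
    aeval (fun i => v i • t) F = eval v F • t ^ d := by
  rw [aeval_def, eval₂_eq, eval_eq, Finset.sum_smul]
  refine Finset.sum_congr rfl fun m hm => ?_
  have hdeg : ∑ i ∈ m.support, m i = d := by
    exact (hF.degree_eq_sum_deg_support hm).symm
  simp only [smul_pow, Finset.prod_smul, Finset.prod_pow_eq_pow_sum, hdeg, ← Algebra.smul_def,
    smul_smul]

lemma exists_eq_one_eval_ne_zero {k ι : Type*} [Field k] [Infinite k] {F : MvPolynomial ι k}
    {d : ℕ} (hF : F.IsHomogeneous d) (hF0 : F ≠ 0) (hd : d ≠ 0) :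
    ∃ (v : ι → k) (j : ι), v j = 1 ∧ eval v F ≠ 0 := by
  obtain ⟨v, hv⟩ : ∃ v, eval v F ≠ 0 := by
    by_contra! h
    exact hF0 (hF.eq_zero_of_forall_eval_eq_zero h)
  obtain ⟨j, hj⟩ : ∃ j, v j ≠ 0 := by
    by_contra! h
    obtain rfl : v = 0 := _root_.funext h
    exact hv (by rw [eval_zero, constantCoeff_eq, hF.coeff_eq_zero (by simpa using hd.symm)])
  refine ⟨fun i => v i • (v j)⁻¹, j, mul_inv_cancel₀ hj, ?_⟩
  rw [← coe_aeval_eq_eval, RingHom.coe_coe, aeval_smul_of_isHomogeneous hF]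
  exact smul_ne_zero hv (pow_ne_zero d (inv_ne_zero hj))

end HomogeneousForms

section LinearProjection

lemma isIntegralElem_of_aeval_add_smul_eq_zero {k A R ι : Type*} [Field k] [CommRing A]
    [Algebra k A] [CommRing R] [Algebra k R] (φ : R →ₐ[k] A) {c : ι → R} {v : ι → k} {t : A}
    {F : MvPolynomial ι k} (hF : aeval (fun i => φ (c i) + v i • t) F = 0)
    (hFv : eval v (homogeneousComponent F.totalDegree F) ≠ 0) : φ.toRingHom.IsIntegralElem t := by
  set b : k := eval v (homogeneousComponent F.totalDegree F)
  let L : ι → Polynomial R := fun i =>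
    Polynomial.C (c i) + Polynomial.C (algebraMap k R (v i)) * Polynomial.X
  have hL : ∀ i, (L i).natDegree ≤ 1 := fun i => by simp only [L]; compute_degree
  have hLv : (fun i => (L i).coeff 1) = fun i => algebraMap k R (v i) := by
    ext1 i
    simp [L, Polynomial.coeff_C]
  refine ⟨Polynomial.C (algebraMap k R b⁻¹) * aeval L F, ?_, ?_⟩
  · refine Polynomial.monic_of_natDegree_le_of_coeff_eq_one F.totalDegree
      ((Polynomial.natDegree_C_mul_le _ _).trans (natDegree_aeval_le_totalDegree hL F)) ?_
    rw [Polynomial.coeff_C_mul, coeff_aeval_of_natDegree_le_one hL le_rfl, hLv,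
      show aeval (fun i => algebraMap k R (v i)) (homogeneousComponent F.totalDegree F) =
        algebraMap k R b from aeval_algebraMap_apply _ v _, ← map_mul, inv_mul_cancel₀ hFv, map_one]
  · have hcomp : (Polynomial.eval₂RingHom φ.toRingHom t).comp (aeval (R := k) L).toRingHom =
        (aeval (R := k) fun i => φ (c i) + v i • t).toRingHom :=
      MvPolynomial.ringHom_ext (fun r => by simp) fun i => by simp [L, Algebra.smul_def]
    have hLF : (aeval L F).eval₂ φ.toRingHom t = aeval (fun i => φ (c i) + v i • t) F :=
      DFunLike.congr_fun hcomp F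
    rw [Polynomial.eval₂_mul, hLF, hF, mul_zero]

/-- The linear projection of a family `z` along a direction `v` with `v j = 1`: subtracting
multiples of `z j`, it leaves the other members of the family, indexed by `Fin s`. -/
def projectAlong {k A : Type*} [CommRing k] [CommRing A] [Algebra k A] {s : ℕ}
    (v : Fin (s + 1) → k) (j : Fin (s + 1)) (z : Fin (s + 1) → A) : Fin s → A :=
  fun i => z (j.succAbove i) - v (j.succAbove i) • z j

variable {k A : Type*} [Field k] [CommRing A] [Algebra k A] {s : ℕ}
  {v : Fin (s + 1) → k} {j : Fin (s + 1)} {z : Fin (s + 1) → A}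

lemma eq_insertNth_projectAlong_add_smul (hv : v j = 1) (i : Fin (s + 1)) :
    z i = (j.insertNth 0 (projectAlong v j z) : Fin (s + 1) → A) i + v i • z j := by
  refine j.succAboveCases ?_ (fun l => ?_) i
  · simp [hv]
  · simp [projectAlong]

lemma projectAlong_mem_span (i : Fin s) :
    projectAlong v j z i ∈ Submodule.span k (Set.range z) :=
  sub_mem (Submodule.subset_span ⟨_, rfl⟩)
    (Submodule.smul_mem _ _ (Submodule.subset_span ⟨_, rfl⟩))

lemma isIntegralElem_aeval_projectAlong (hv : v j = 1) {F : MvPolynomial (Fin (s + 1)) k}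
    (hF : aeval z F = 0) (hFv : eval v (homogeneousComponent F.totalDegree F) ≠ 0)
    (i : Fin (s + 1)) :
    (aeval (R := k) (projectAlong v j z)).toRingHom.IsIntegralElem (z i) := by
  set φ : MvPolynomial (Fin s) k →ₐ[k] A := aeval (projectAlong v j z)
  let c : Fin (s + 1) → MvPolynomial (Fin s) k := j.insertNth 0 X
  have hφ : ∀ i, z i = φ (c i) + v i • z j := fun i => by
    rw [eq_insertNth_projectAlong_add_smul (z := z) hv i]
    refine j.succAboveCases ?_ (fun l => ?_) i <;> simp [φ, c]
  have hj : φ.toRingHom.IsIntegralElem (z j) := by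
    refine isIntegralElem_of_aeval_add_smul_eq_zero φ (c := c) ?_ hFv
    rwa [← _root_.funext hφ]
  have hvi : φ.toRingHom.IsIntegralElem (algebraMap k A (v i)) := by
    simpa using φ.toRingHom.isIntegralElem_map (x := C (v i))
  rw [hφ i, Algebra.smul_def]
  exact (φ.toRingHom.isIntegralElem_map).add _ (hvi.mul _ hj)

end LinearProjection

section HomogeneousRelation

variable {k A : Type*} [Field k] [CommRing A] [Algebra k A]

lemma card_le_of_trdeg_le {ι : Type*} [Fintype ι] {x : ι → A} (hx : AlgebraicIndependent k x)
    {m : ℕ} (hA : Algebra.trdeg k A ≤ m) : Fintype.card ι ≤ m := by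
  have h := hx.lift_cardinalMk_le_trdeg.trans (Cardinal.lift_le.2 hA)
  simpa using h

variable [IsDomain A]

lemma trdeg_polynomial : Algebra.trdeg k (Polynomial A) = Algebra.trdeg k A + 1 := by
  rw [← trdeg_add_eq k A, Polynomial.trdeg_of_isDomain]

-- A relation between the elements `z i * T` of `A[T]`, read off in its top degree in `T`.
lemma exists_isHomogeneous_aeval_eq_zero {m s : ℕ} (hA : Algebra.trdeg k A ≤ m)
    (hs : m + 1 < s) (z : Fin s → A) :
    ∃ (F : MvPolynomial (Fin s) k) (d : ℕ),
      F ≠ 0 ∧ d ≠ 0 ∧ F.IsHomogeneous d ∧ aeval z F = 0 := by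
  let L : Fin s → Polynomial A := fun i => Polynomial.C (z i) * Polynomial.X
  have hL : ∀ i, (L i).natDegree ≤ 1 := fun i => by simp only [L]; compute_degree
  have hdep : ¬ AlgebraicIndependent k L := fun h => by
    have hle : Algebra.trdeg k (Polynomial A) ≤ (m + 1 : ℕ) := by
      rw [trdeg_polynomial, Nat.cast_succ]
      exact add_le_add_left hA 1
    exact hs.not_ge (by simpa using card_le_of_trdeg_le h hle)
  obtain ⟨H, hHL, hH⟩ : ∃ H, aeval L H = 0 ∧ H ≠ 0 := by
    simpa [algebraicIndependent_iff] using hdep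
  refine ⟨homogeneousComponent H.totalDegree H, H.totalDegree,
    homogeneousComponent_totalDegree_ne_zero hH, totalDegree_ne_zero_of_aeval_eq_zero hH hHL,
    homogeneousComponent_isHomogeneous _ _, ?_⟩
  have htop := coeff_aeval_of_natDegree_le_one (k := k) hL (le_refl H.totalDegree)
  simpa [hHL, L] using htop.symm

end HomogeneousRelation

section LinearProjection

variable {k A : Type*} [Field k] [CommRing A] [Algebra k A] {s : ℕ}
  {v : Fin (s + 1) → k} {j : Fin (s + 1)} {z : Fin (s + 1) → A}

lemma span_range_projectAlong_eq_top {F : MvPolynomial (Fin (s + 1)) k} {d : ℕ}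
    (hF : F.IsHomogeneous d) (hz : aeval z F = 0) (hv : v j = 1) (hFv : eval v F ≠ 0)
    (htop : Ideal.span (Set.range z) = ⊤) :
    Ideal.span (Set.range (projectAlong v j z)) = ⊤ := by
  set J : Ideal A := Ideal.span (Set.range (projectAlong v j z))
  have hmk : ∀ i, Ideal.Quotient.mkₐ k J (z i) = v i • Ideal.Quotient.mkₐ k J (z j) := fun i => by
    conv_lhs => rw [eq_insertNth_projectAlong_add_smul (z := z) hv i]
    rw [map_add, map_smul, add_eq_right]
    refine j.succAboveCases ?_ (fun l => ?_) i
    · simp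
    · rw [Fin.insertNth_apply_succAbove]
      exact Ideal.Quotient.eq_zero_iff_mem.2 (Ideal.subset_span ⟨l, rfl⟩)
  have hpow : Ideal.Quotient.mkₐ k J (z j) ^ d = 0 := by
    have h : aeval (fun i => Ideal.Quotient.mkₐ k J (z i)) F = 0 := by
      rw [← comp_aeval_apply, hz, map_zero]
    rwa [_root_.funext hmk, aeval_smul_of_isHomogeneous hF, smul_eq_zero_iff_right hFv] at h
  have hrad : ∀ i, z i ∈ J.radical := fun i => by
    refine ⟨d, Ideal.Quotient.eq_zero_iff_mem.1 ?_⟩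
    rw [map_pow, ← Ideal.Quotient.mkₐ_eq_mk k, hmk, smul_pow, hpow, smul_zero]
  rw [← Ideal.radical_eq_top, eq_top_iff, ← htop]
  exact Ideal.span_le.2 (Set.range_subset_iff.2 hrad)

lemma isIntegral_aeval_of_isIntegralElem {k A ι κ : Type*} [CommRing k] [CommRing A] [Algebra k A]
    {z : ι → A} {y : κ → A} (hz : (aeval (R := k) z).toRingHom.IsIntegral)
    (h : ∀ i, (aeval (R := k) y).toRingHom.IsIntegralElem (z i)) :
    (aeval (R := k) y).toRingHom.IsIntegral := by
  algebraize [(aeval (R := k) y).toRingHom]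
  let S : Subalgebra (MvPolynomial κ k) A := integralClosure (MvPolynomial κ k) A
  have hS : ∀ F, (aeval (R := k) z).toRingHom F ∈ S := fun F => by
    induction F using MvPolynomial.induction_on with
    | C r =>
      change (aeval (R := k) y).toRingHom.IsIntegralElem _
      simpa using (aeval (R := k) y).toRingHom.isIntegralElem_map (x := C r)
    | add F G hF hG => rw [map_add]; exact S.add_mem hF hG
    | mul_X F i hF =>
      rw [map_mul]
      refine S.mul_mem hF ?_
      change (aeval (R := k) y).toRingHom.IsIntegralElem _
      simpa using h i
  have hSA : (algebraMap S A).IsIntegral :=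
    RingHom.IsIntegral.tower_top ((aeval (R := k) z).toRingHom.codRestrict S hS) _ hz
  exact RingHom.IsIntegral.trans (algebraMap (MvPolynomial κ k) S) (algebraMap S A)
    Algebra.IsIntegral.isIntegral hSA

end LinearProjection

section LinearNormalization

variable {k A : Type*} [Field k] [CommRing A] [Algebra k A]

lemma isIntegral_aeval_projectAlong {s : ℕ} {v : Fin (s + 1) → k} {j : Fin (s + 1)}
    {z : Fin (s + 1) → A} (hz : (aeval (R := k) z).toRingHom.IsIntegral) (hv : v j = 1)
    {F : MvPolynomial (Fin (s + 1)) k} (hF : aeval z F = 0)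
    (hFv : eval v (homogeneousComponent F.totalDegree F) ≠ 0) :
    (aeval (R := k) (projectAlong v j z)).toRingHom.IsIntegral :=
  isIntegral_aeval_of_isIntegralElem hz (isIntegralElem_aeval_projectAlong hv hF hFv)

variable [IsDomain A] {m : ℕ}

lemma algebraicIndependent_of_isIntegral_aeval (hA : Algebra.trdeg k A = m) {w : Fin m → A}
    (hw : (aeval (R := k) w).toRingHom.IsIntegral) : AlgebraicIndependent k w := by
  have hadj : ∀ F, (aeval (R := k) w).toRingHom F ∈ Algebra.adjoin k (Set.range w) := fun F => by
    rw [Algebra.adjoin_range_eq_range_aeval]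
    exact ⟨F, rfl⟩
  have hint : Algebra.IsIntegral (Algebra.adjoin k (Set.range w)) A := algebraMap_isIntegral_iff.1
    (RingHom.IsIntegral.tower_top ((aeval (R := k) w).toRingHom.codRestrict _ hadj) _ hw)
  have halg : Algebra.IsAlgebraic (Algebra.adjoin k (Set.range w)) A := hint.isAlgebraic
  exact (Algebra.IsAlgebraic.isTranscendenceBasis_of_lift_le_trdeg_of_finite k w
    (by simp [hA])).1

variable [Infinite k]

lemma exists_span_eq_top_isIntegral_of_trdeg_le (hA : Algebra.trdeg k A ≤ m) (e : ℕ)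
    (z : Fin (m + 1 + e) → A) (htop : Ideal.span (Set.range z) = ⊤)
    (hz : (aeval (R := k) z).toRingHom.IsIntegral) :
    ∃ y : Fin (m + 1) → A, (∀ i, y i ∈ Submodule.span k (Set.range z)) ∧
      Ideal.span (Set.range y) = ⊤ ∧ (aeval (R := k) y).toRingHom.IsIntegral := by
  induction e with
  | zero => exact ⟨z, fun i => Submodule.subset_span ⟨i, rfl⟩, htop, hz⟩
  | succ e ih =>
    obtain ⟨F, d, hF0, hd, hF, hFz⟩ := exists_isHomogeneous_aeval_eq_zero hA (by lia) z
    obtain ⟨v, j, hv, hFv⟩ := exists_eq_one_eval_ne_zero hF hF0 hd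
    have hFv' : eval v (homogeneousComponent F.totalDegree F) ≠ 0 := by
      rwa [hF.totalDegree hF0, homogeneousComponent_of_mem hF, if_pos rfl]
    obtain ⟨y, hy, hytop, hyint⟩ := ih (projectAlong v j z)
      (span_range_projectAlong_eq_top hF hFz hv hFv htop)
      (isIntegral_aeval_projectAlong hz hv hFz hFv')
    refine ⟨y, fun i => ?_, hytop, hyint⟩
    exact Submodule.span_le.2 (Set.range_subset_iff.2 projectAlong_mem_span) (hy i)

lemma exists_algebraicIndependent_isIntegral (hA : Algebra.trdeg k A = m)
    {y : Fin (m + 1) → A} (htop : Ideal.span (Set.range y) = ⊤)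
    (hy : (aeval (R := k) y).toRingHom.IsIntegral) :
    ∃ (l : A) (w : Fin m → A), AlgebraicIndependent k w ∧
      (aeval (R := k) w).toRingHom.IsIntegral ∧
      Ideal.span (Set.range (Fin.cons l w : Fin (m + 1) → A)) = ⊤ ∧
      ∀ i, (Fin.cons l w : Fin (m + 1) → A) i ∈ Submodule.span k (Set.range y) := by
  obtain ⟨G, hGy, hG⟩ : ∃ G, aeval y G = 0 ∧ G ≠ 0 := by
    have hdep : ¬ AlgebraicIndependent k y := fun h => by
      simpa using card_le_of_trdeg_le h hA.le
    simpa [algebraicIndependent_iff] using hdep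
  obtain ⟨v, j, hv, hGv⟩ := exists_eq_one_eval_ne_zero (homogeneousComponent_isHomogeneous _ G)
    (homogeneousComponent_totalDegree_ne_zero hG) (totalDegree_ne_zero_of_aeval_eq_zero hG hGy)
  have hw := isIntegral_aeval_projectAlong hy hv hGy hGv
  refine ⟨y j, projectAlong v j y, algebraicIndependent_of_isIntegral_aeval hA hw, hw, ?_, ?_⟩
  · rw [eq_top_iff, ← htop, Ideal.span_le, Set.range_subset_iff]
    refine j.succAboveCases (Ideal.subset_span ⟨0, rfl⟩) fun i => ?_
    have hyi : y (j.succAbove i) =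
        projectAlong v j y i + algebraMap k A (v (j.succAbove i)) * y j := by
      simp [projectAlong, Algebra.smul_def]
    rw [hyi]
    exact add_mem (Ideal.subset_span ⟨i.succ, rfl⟩)
      (Ideal.mul_mem_left _ _ (Ideal.subset_span ⟨0, rfl⟩))
  · exact Fin.cases (Submodule.subset_span ⟨j, rfl⟩) fun i => projectAlong_mem_span i

end LinearNormalization

section LyingOver

lemma exists_aeval_eq_zero_eval_zero_ne_zero {k A ι : Type*} [Field k] [CommRing A] [Algebra k A]
    {y : ι → A} (hy : (aeval (R := k) y).toRingHom.IsIntegral)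
    (htop : Ideal.span (Set.range y) = ⊤) :
    ∃ F : MvPolynomial ι k, aeval y F = 0 ∧ eval 0 F ≠ 0 := by
  have hmap : (RingHom.ker (aeval (R := k) y).toRingHom ⊔ Ideal.span (Set.range X)).map
      (aeval (R := k) y).toRingHom = ⊤ := by
    rw [eq_top_iff, ← htop, Ideal.span_le, Set.range_subset_iff]
    intro i
    have hX := Ideal.mem_map_of_mem (aeval (R := k) y).toRingHom
      (le_sup_right (a := RingHom.ker (aeval (R := k) y).toRingHom)
        (Ideal.subset_span (s := Set.range X) ⟨i, rfl⟩))
    simpa using hX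
  rw [Ideal.map_eq_top_iff_of_ker_le _ le_sup_left hy] at hmap
  obtain ⟨F, hF, G, hG, hFG⟩ := Submodule.mem_sup.1 ((Ideal.eq_top_iff_one _).1 hmap)
  refine ⟨F, hF, ?_⟩
  have hG0 : eval 0 G = 0 := by
    rw [eval_zero]
    refine RingHom.mem_ker.1 (Ideal.span_le.2 (Set.range_subset_iff.2 fun i => ?_) hG)
    simp
  have h := congrArg (eval (0 : ι → k)) hFG
  rw [map_add, hG0, add_zero, map_one] at h
  exact h ▸ one_ne_zero

end LyingOver

section BoundedRelation

variable {k : Type*} [CommSemiring k]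

lemma mem_restrictDegree_iff_degreeOf_le {τ : Type*} {f : MvPolynomial τ k} {d : ℕ} :
    f ∈ restrictDegree τ k d ↔ ∀ i, degreeOf i f ≤ d := by
  simp only [mem_restrictDegree, degreeOf_le_iff]
  exact ⟨fun h i a ha => h a ha i, fun h a ha i => h i a ha⟩

lemma finite_finrank_restrictDegree {k : Type*} [CommRing k] [Nontrivial k]
    (τ : Type*) [Fintype τ] (d : ℕ) :
    Module.Finite k (restrictDegree τ k d) ∧
      Module.finrank k (restrictDegree τ k d) = (d + 1) ^ Fintype.card τ := by
  classical
  let e : {a : τ →₀ ℕ | ∀ i, a i ≤ d} ≃ (τ → Fin (d + 1)) :=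
    (Finsupp.equivFunOnFinite.subtypeEquiv fun a => Iff.rfl).trans
      (Equiv.subtypePiEquivPi.trans (Equiv.piCongrRight fun _ =>
        (Equiv.subtypeEquivRight fun _ => Nat.lt_succ_iff.symm).trans Fin.equivSubtype.symm))
  let b := (basisRestrictSupport k {a : τ →₀ ℕ | ∀ i, a i ≤ d}).reindex e
  refine ⟨Module.Finite.of_basis b, ?_⟩
  exact (Module.finrank_eq_card_basis b).trans (by simp)

lemma aeval_mem_restrictDegree {ι τ : Type*} [Fintype ι] {z : ι → MvPolynomial τ k} {D s : ℕ}
    (hz : ∀ j, z j ∈ restrictDegree τ k D) {G : MvPolynomial ι k} (hG : G ∈ restrictDegree ι k s) :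
    aeval z G ∈ restrictDegree τ k (Fintype.card ι * (s * D)) := by
  classical
  simp only [mem_restrictDegree_iff_degreeOf_le] at hz ⊢
  intro i
  rw [aeval_def, eval₂_eq]
  refine (degreeOf_sum_le _ _ _).trans (Finset.sup_le fun a ha => ?_)
  refine (degreeOf_C_mul_le _ _ _).trans ((degreeOf_prod_le _ _ _).trans ?_)
  calc ∑ j ∈ a.support, degreeOf i (z j ^ a j) ≤ ∑ _j ∈ a.support, s * D :=
        Finset.sum_le_sum fun j _ => (degreeOf_pow_le _ _ _).trans
          (Nat.mul_le_mul ((mem_restrictDegree _ _ _).1 hG a ha j) (hz j i))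
    _ ≤ Fintype.card ι * (s * D) := by
        rw [Finset.sum_const, smul_eq_mul]
        exact Nat.mul_le_mul_right _ (Finset.card_le_univ _)

lemma totalDegree_le_of_mem_restrictDegree {ι : Type*} [Fintype ι] {G : MvPolynomial ι k} {s : ℕ}
    (hG : G ∈ restrictDegree ι k s) : G.totalDegree ≤ Fintype.card ι * s := by
  refine Finset.sup_le fun a ha => ?_
  rw [Finsupp.sum_fintype _ _ fun _ => rfl, ← smul_eq_mul, ← Finset.card_univ]
  exact Finset.sum_le_card_nsmul _ _ _ fun i _ => (mem_restrictDegree _ _ _).1 hG a ha i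

-- There are more monomials of degree at most `s` in each of the `m + 1` variables than monomials
-- of degree at most `(m + 1) * (s * D)` in each of `m` variables, where their images live.
lemma exists_ne_zero_aeval_eq_zero_totalDegree_le {k : Type*} [Field k] {m D : ℕ}
    {z : Fin (m + 1) → MvPolynomial (Fin m) k} (hz : ∀ j, z j ∈ restrictDegree (Fin m) k D) :
    ∃ G : MvPolynomial (Fin (m + 1)) k, G ≠ 0 ∧ aeval z G = 0 ∧
      G.totalDegree ≤ (m + 1) * (D * (m + 1) + 1) ^ m := by
  set s := (D * (m + 1) + 1) ^ m with hs
  obtain ⟨_, hdom⟩ := finite_finrank_restrictDegree (k := k) (Fin (m + 1)) s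
  obtain ⟨_, hcod⟩ := finite_finrank_restrictDegree (k := k) (Fin m) ((m + 1) * (s * D))
  let T : restrictDegree (Fin (m + 1)) k s →ₗ[k] restrictDegree (Fin m) k ((m + 1) * (s * D)) :=
    (aeval z).toLinearMap.restrict fun G hG => by simpa using aeval_mem_restrictDegree hz hG
  have hcard : ((m + 1) * (s * D) + 1) ^ m < (s + 1) ^ (m + 1) := by
    calc ((m + 1) * (s * D) + 1) ^ m ≤ ((D * (m + 1) + 1) * (s + 1)) ^ m :=
          Nat.pow_le_pow_left (by nlinarith) m
      _ = s * (s + 1) ^ m := by rw [mul_pow, ← hs]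
      _ < (s + 1) ^ (m + 1) := by rw [pow_succ']; gcongr; lia
  obtain ⟨⟨G, hG⟩, hGT, hG0⟩ := Submodule.exists_mem_ne_zero_of_ne_bot
    (LinearMap.ker_ne_bot_of_finrank_lt (f := T) (by simpa [hdom, hcod] using hcard))
  refine ⟨G, fun h => hG0 (Subtype.ext h), congrArg Subtype.val hGT, ?_⟩
  simpa using totalDegree_le_of_mem_restrictDegree hG

end BoundedRelation

section PrincipalRelation

variable {k A : Type*} [CommRing k] [CommRing A] [Algebra k A]

lemma aeval_cons_eq_eval₂_finSuccEquiv {m : ℕ} (w : Fin m → A) (l : A)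
    (F : MvPolynomial (Fin (m + 1)) k) :
    aeval (Fin.cons l w : Fin (m + 1) → A) F =
      (finSuccEquiv k m F).eval₂ (aeval (R := k) w).toRingHom l := by
  have hcomp : (aeval (R := k) (Fin.cons l w : Fin (m + 1) → A)).toRingHom =
      (Polynomial.eval₂RingHom (aeval (R := k) w).toRingHom l).comp
        (finSuccEquiv k m).toRingEquiv.toRingHom :=
    MvPolynomial.ringHom_ext (fun r => by simp [finSuccEquiv_apply]) fun i => by
      refine Fin.cases ?_ (fun j => ?_) i <;> simp [finSuccEquiv_X_zero, finSuccEquiv_X_succ]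
  exact DFunLike.congr_fun hcomp F

lemma isIntegral_aeval_cons {m : ℕ} {w : Fin m → A} (l : A)
    (hw : (aeval (R := k) w).toRingHom.IsIntegral) :
    (aeval (R := k) (Fin.cons l w : Fin (m + 1) → A)).toRingHom.IsIntegral :=
  isIntegral_aeval_of_isIntegralElem hw fun i => by
    simpa using (aeval (R := k) (Fin.cons l w : Fin (m + 1) → A)).toRingHom.isIntegralElem_map
      (x := X i.succ)

lemma exists_aeval_cons_eq_zero_forall_dvd [IsDomain k] [UniqueFactorizationMonoid k] [IsDomain A]
    {m : ℕ} {w : Fin m → A} {l : A}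
    (hw : AlgebraicIndependent k w) (hl : (aeval (R := k) w).toRingHom.IsIntegralElem l) :
    ∃ F : MvPolynomial (Fin (m + 1)) k, aeval (Fin.cons l w : Fin (m + 1) → A) F = 0 ∧
      ∀ G, aeval (Fin.cons l w : Fin (m + 1) → A) G = 0 → F ∣ G := by
  algebraize [(aeval (R := k) w).toRingHom]
  have hfaith : FaithfulSMul (MvPolynomial (Fin m) k) A :=
    (faithfulSMul_iff_algebraMap_injective _ _).2 hw
  refine ⟨(finSuccEquiv k m).symm (minpoly (MvPolynomial (Fin m) k) l), ?_, fun G hG => ?_⟩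
  · rw [aeval_cons_eq_eval₂_finSuccEquiv, AlgEquiv.apply_symm_apply]
    exact minpoly.aeval _ l
  · rw [aeval_cons_eq_eval₂_finSuccEquiv] at hG
    rw [← map_dvd_iff (finSuccEquiv k m), AlgEquiv.apply_symm_apply]
    exact minpoly.isIntegrallyClosed_dvd hl hG

lemma exists_span_aeval_eq_zero_forall_dvd {k A : Type*} [Field k] [Infinite k] [CommRing A]
    [IsDomain A] [Algebra k A] {ι : Type*} [Finite ι] {m : ℕ}
    (hA : Algebra.trdeg k A = m) {x : ι → A}
    (hx : Function.Surjective (aeval (R := k) x)) (htop : Ideal.span (Set.range x) = ⊤) :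
    ∃ y : Fin (m + 1) → A, (∀ i, y i ∈ Submodule.span k (Set.range x)) ∧
      ∃ F : MvPolynomial (Fin (m + 1)) k, aeval y F = 0 ∧ eval 0 F ≠ 0 ∧
        ∀ G, aeval y G = 0 → F ∣ G := by
  let z : Fin (m + 1 + Nat.card ι) → A := Fin.append 0 (x ∘ (Finite.equivFin ι).symm)
  have hxz : ∀ i, ∃ j, z j = x i := fun i => ⟨Fin.natAdd _ (Finite.equivFin ι i), by simp [z]⟩
  have hzx : ∀ j, z j ∈ Submodule.span k (Set.range x) := fun j => by
    refine Fin.addCases (fun i => ?_) (fun i => ?_) j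
    · simp [z]
    · simpa [z] using Submodule.subset_span (Set.mem_range_self _)
  have hztop : Ideal.span (Set.range z) = ⊤ := by
    rw [eq_top_iff, ← htop]
    exact Ideal.span_mono (Set.range_subset_iff.2 hxz)
  have hz : (aeval (R := k) z).toRingHom.IsIntegral :=
    isIntegral_aeval_of_isIntegralElem (RingHom.isIntegral_of_surjective _ hx) fun i => by
      obtain ⟨j, hj⟩ := hxz i
      simpa [hj] using (aeval (R := k) z).toRingHom.isIntegralElem_map (x := X j)
  obtain ⟨y, hyz, hytop, hy⟩ := exists_span_eq_top_isIntegral_of_trdeg_le hA.le _ z hztop hz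
  obtain ⟨l, w, hw, hwint, hlwtop, hlwy⟩ := exists_algebraicIndependent_isIntegral hA hytop hy
  refine ⟨Fin.cons l w, fun i => ?_, ?_⟩
  · have hyx := Submodule.span_le.2 (Set.range_subset_iff.2 hzx)
    exact Submodule.span_le.2 (Set.range_subset_iff.2 fun j => hyx (hyz j)) (hlwy i)
  · obtain ⟨F, hF, hdvd⟩ := exists_aeval_cons_eq_zero_forall_dvd hw (hwint l)
    obtain ⟨G, hG, hG0⟩ :=
      exists_aeval_eq_zero_eval_zero_ne_zero (isIntegral_aeval_cons l hwint) hlwtop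
    exact ⟨F, hF, fun h => hG0 (zero_dvd_iff.1 (h ▸ map_dvd (eval 0) (hdvd G hG))), hdvd⟩

end PrincipalRelation

section Separation

lemma eval_aeval {k ι τ : Type*} [CommSemiring k] (a : τ → k) (l : ι → MvPolynomial τ k)
    (F : MvPolynomial ι k) :
    eval a (aeval l F) = eval (fun i => eval a (l i)) F :=
  comp_aeval_apply l (aeval (R := k) a) F

lemma totalDegree_aeval_le_of_totalDegree_le_one {k ι τ : Type*} [CommSemiring k]
    {w : ι → MvPolynomial τ k}
    (hw : ∀ i, (w i).totalDegree ≤ 1) (F : MvPolynomial ι k) :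
    (aeval w F).totalDegree ≤ F.totalDegree := by
  rw [aeval_def, eval₂_eq]
  refine totalDegree_finsetSum_le fun a ha => (totalDegree_mul _ _).trans ?_
  rw [algebraMap_eq, totalDegree_C, zero_add]
  refine (totalDegree_finsetProd _ _).trans (le_trans ?_ (le_totalDegree ha))
  refine Finset.sum_le_sum fun i _ => (totalDegree_pow _ _).trans ?_
  simpa using Nat.mul_le_mul_left (a i) (hw i)

variable {k : Type*} [Field k]

lemma span_range_eq_top_of_aeval_eq_zero {A ι : Type*} [CommRing A] [Algebra k A] {x : ι → A}
    {F : MvPolynomial ι k} (hF : aeval x F = 0) (hF0 : eval 0 F ≠ 0) :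
    Ideal.span (Set.range x) = ⊤ := by
  set J : Ideal A := Ideal.span (Set.range x)
  have hx : (fun i => Ideal.Quotient.mkₐ k J (x i)) = 0 := _root_.funext fun i =>
    Ideal.Quotient.eq_zero_iff_mem.2 (Ideal.subset_span ⟨i, rfl⟩)
  have hconst : Ideal.Quotient.mkₐ k J (algebraMap k A (eval 0 F)) = 0 := by
    rw [AlgHom.commutes, eval_zero, ← aeval_zero (S₁ := A ⧸ J) F, ← hx, ← comp_aeval_apply, hF,
      map_zero]
  exact J.eq_top_of_isUnit_mem (Ideal.Quotient.eq_zero_iff_mem.1 hconst)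
    ((isUnit_iff_ne_zero.2 hF0).map (algebraMap k A))

lemma trdeg_range_eq {σ : Type*} {m : ℕ} (φ : MvPolynomial σ k →ₐ[k] MvPolynomial (Fin m) k)
    {g : Fin m → MvPolynomial σ k} (hg : AlgebraicIndependent k fun i => φ (g i)) :
    Algebra.trdeg k φ.range = m := by
  refine le_antisymm ?_ ?_
  · have h := trdeg_le_of_injective φ.range.val Subtype.val_injective
    simpa using h
  · have hg' : AlgebraicIndependent k fun i => φ.rangeRestrict (g i) :=
      AlgebraicIndependent.of_comp φ.range.val hg
    have h := hg'.lift_cardinalMk_le_trdeg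
    simpa using h

lemma exists_totalDegree_le_eval_zero_ne_zero [Infinite k] {σ : Type*} [Finite σ] {m D : ℕ}
    {φ : MvPolynomial σ k →ₐ[k] MvPolynomial (Fin m) k}
    (hφ : ∀ s, φ (X s) ∈ restrictDegree (Fin m) k D)
    {g : Fin m → MvPolynomial σ k} (hg : AlgebraicIndependent k fun i => φ (g i))
    {F : MvPolynomial σ k} (hF : φ F = 0) (hF0 : eval 0 F ≠ 0) :
    ∃ f, φ f = 0 ∧ eval 0 f ≠ 0 ∧ f.totalDegree ≤ (m + 1) * (D * (m + 1) + 1) ^ m := by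
  let x : σ → φ.range := fun s => φ.rangeRestrict (X s)
  have hx : aeval x = φ.rangeRestrict := (aeval_unique φ.rangeRestrict).symm
  obtain ⟨y, hyx, R, hRy, hR0, hdvd⟩ := exists_span_aeval_eq_zero_forall_dvd (trdeg_range_eq φ hg)
    (hx ▸ φ.rangeRestrict_surjective)
    (span_range_eq_top_of_aeval_eq_zero (hx ▸ Subtype.ext hF) hF0)
  have hlift : ∀ i, ∃ l ∈ Submodule.span k (Set.range (X : σ → MvPolynomial σ k)),
      φ.rangeRestrict l = y i := fun i => by
    have hyi := hyx i
    rw [Set.range_comp', ← AlgHom.coe_toLinearMap, ← Submodule.map_span] at hyi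
    exact hyi
  choose l hl hly using hlift
  have hl1 : ∀ i, (l i).IsHomogeneous 1 := fun i => by
    have := hl i
    rwa [← homogeneousSubmodule_one_eq_span_X] at this
  have hly' : aeval y = φ.rangeRestrict.comp (aeval l) := by
    ext1 i
    simp [hly]
  have hlφ : ∀ i, φ (l i) ∈ restrictDegree (Fin m) k D := fun i =>
    Submodule.span_le (p := (restrictDegree (Fin m) k D).comap φ.toLinearMap).2
      (Set.range_subset_iff.2 hφ) (hl i)
  obtain ⟨G, hG0, hGl, hGdeg⟩ := exists_ne_zero_aeval_eq_zero_totalDegree_le hlφ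
  have hRG : R ∣ G := hdvd G <| Subtype.ext <| by
    rw [hly']
    exact (comp_aeval_apply l φ G).trans hGl
  refine ⟨aeval l R, ?_, ?_, ?_⟩
  · rw [hly'] at hRy
    exact congrArg Subtype.val hRy
  · have hl0 : (fun i => eval 0 (l i)) = 0 := _root_.funext fun i => by
      rw [eval_zero, constantCoeff_eq, (hl1 i).coeff_eq_zero (by simp), Pi.zero_apply]
    rwa [eval_aeval, hl0]
  · exact ((totalDegree_aeval_le_of_totalDegree_le_one (fun i => (hl1 i).totalDegree_le) R).trans
      (totalDegree_le_of_dvd_of_isDomain hRG hG0)).trans hGdeg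

lemma exists_totalDegree_le_eval_ne_zero [Infinite k] {σ : Type*} [Finite σ] {m D : ℕ}
    {φ : MvPolynomial σ k →ₐ[k] MvPolynomial (Fin m) k}
    (hφ : ∀ s, φ (X s) ∈ restrictDegree (Fin m) k D)
    {g : Fin m → MvPolynomial σ k} (hg : AlgebraicIndependent k fun i => φ (g i))
    {p : σ → k} {F : MvPolynomial σ k} (hF : φ F = 0) (hFp : eval p F ≠ 0) :
    ∃ f, φ f = 0 ∧ eval p f ≠ 0 ∧ f.totalDegree ≤ (m + 1) * (D * (m + 1) + 1) ^ m := by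
  let τ : MvPolynomial σ k →ₐ[k] MvPolynomial σ k := aeval fun s => X s + C (p s)
  let δ : MvPolynomial σ k →ₐ[k] MvPolynomial σ k := aeval fun s => X s - C (p s)
  have hδτ : ∀ f, δ (τ f) = f := DFunLike.congr_fun <|
    show δ.comp τ = AlgHom.id k _ from MvPolynomial.algHom_ext fun s => by
      simp [δ, τ, ← algebraMap_eq]
  have hτ_eval : ∀ f, eval 0 (τ f) = eval p f := fun f => by
    simp only [τ, eval_aeval, map_add, eval_X, eval_C, Pi.zero_apply, zero_add]
  have hδ_eval : ∀ f, eval p (δ f) = eval 0 f := fun f => by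
    simp only [δ, eval_aeval, map_sub, eval_X, eval_C, sub_self]
    rfl
  have hφδ : ∀ s, φ.comp δ (X s) ∈ restrictDegree (Fin m) k D := fun s => by
    have hC : C (p s) ∈ restrictDegree (Fin m) k D :=
      mem_restrictDegree_iff_degreeOf_le.2 fun i => by simp [degreeOf_C]
    simpa only [δ, AlgHom.comp_apply, aeval_X, map_sub, algHom_C, algebraMap_eq] using
      sub_mem (hφ s) hC
  obtain ⟨f, hf, hf0, hfdeg⟩ := exists_totalDegree_le_eval_zero_ne_zero (g := fun i => τ (g i))
    (F := τ F) hφδ (by simpa only [AlgHom.comp_apply, hδτ] using hg)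
    (by rwa [AlgHom.comp_apply, hδτ]) (by rwa [hτ_eval])
  refine ⟨δ f, hf, by rwa [hδ_eval], ?_⟩
  refine (totalDegree_aeval_le_of_totalDegree_le_one (fun s => ?_) f).trans hfdeg
  exact (totalDegree_sub_C_le _ _).trans (totalDegree_X s).le

end Separation

section UnipotentPowers

variable {k : Type*} [Field k]

/-- The polynomial `X (X - 1) ⋯ (X - j + 1) / j!` interpolating the binomial coefficients
`a ↦ a.choose j`; it is only meaningful in characteristic zero. -/
def choosePolynomial (k : Type*) [Field k] (j : ℕ) : Polynomial k :=
  (j.factorial : k)⁻¹ • descPochhammer k j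

lemma natDegree_choosePolynomial_le (j : ℕ) : (choosePolynomial k j).natDegree ≤ j :=
  (Polynomial.natDegree_smul_le _ _).trans (descPochhammer_natDegree k j).le

lemma eval_natCast_choosePolynomial [CharZero k] (j a : ℕ) :
    (choosePolynomial k j).eval (a : k) = a.choose j := by
  rw [choosePolynomial, Polynomial.eval_smul, descPochhammer_eval_eq_descFactorial,
    Nat.descFactorial_eq_factorial_mul_choose, Nat.cast_mul, smul_eq_mul, inv_mul_cancel_left₀]
  exact_mod_cast j.factorial_ne_zero

lemma pow_eq_sum_range_choose_smul_sub_one_pow {R : Type*} [Ring R] {u : R} {d : ℕ}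
    (hu : (u - 1) ^ d = 0) (a : ℕ) :
    u ^ a = ∑ j ∈ Finset.range d, a.choose j • (u - 1) ^ j := by
  have hbinom : u ^ a = ∑ j ∈ Finset.range (a + 1), a.choose j • (u - 1) ^ j := by
    simpa [-nsmul_eq_mul, nsmul_eq_mul'] using (Commute.one_right (u - 1)).add_pow a
  rw [hbinom]
  calc ∑ j ∈ Finset.range (a + 1), a.choose j • (u - 1) ^ j
      = ∑ j ∈ Finset.range (max (a + 1) d), a.choose j • (u - 1) ^ j :=
        Finset.sum_subset (Finset.range_mono (le_max_left _ _)) fun j _ hj => by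
          rw [Nat.choose_eq_zero_of_lt (by simpa using hj), zero_smul]
    _ = ∑ j ∈ Finset.range d, a.choose j • (u - 1) ^ j :=
        (Finset.sum_subset (Finset.range_mono (le_max_right _ _)) fun j _ hj => by
          rw [pow_eq_zero_of_le (by simpa using hj) hu, smul_zero]).symm

variable {ι : Type*} [Fintype ι] [DecidableEq ι]

/-- The matrix of polynomials in `t` which represents `u ^ t` when `(u - 1) ^ d = 0`. -/
def unipotentPow (d : ℕ) (u : Matrix ι ι k) : Matrix ι ι (Polynomial k) :=
  Matrix.of fun p q => ∑ j ∈ Finset.range d, ((u - 1) ^ j) p q • choosePolynomial k j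

lemma natDegree_unipotentPow_apply_le (d : ℕ) (u : Matrix ι ι k) (p q : ι) :
    (unipotentPow d u p q).natDegree ≤ d - 1 :=
  Polynomial.natDegree_sum_le_of_forall_le _ _ fun j hj =>
    (Polynomial.natDegree_smul_le _ _).trans <| (natDegree_choosePolynomial_le j).trans <|
      Nat.le_sub_one_of_lt (Finset.mem_range.1 hj)

lemma eval_natCast_unipotentPow_apply [CharZero k] {d : ℕ} {u : Matrix ι ι k}
    (hu : (u - 1) ^ d = 0) (a : ℕ) (p q : ι) :
    (unipotentPow d u p q).eval (a : k) = (u ^ a) p q := by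
  rw [pow_eq_sum_range_choose_smul_sub_one_pow hu, Matrix.sum_apply, unipotentPow, Matrix.of_apply,
    Polynomial.eval_finsetSum]
  refine Finset.sum_congr rfl fun j _ => ?_
  rw [Matrix.smul_apply, Polynomial.eval_smul, eval_natCast_choosePolynomial, smul_eq_mul,
    nsmul_eq_mul, mul_comm]

end UnipotentPowers

section MatrixProductDegree

variable {k : Type*} [CommSemiring k] {ι τ : Type*} [Fintype ι] [DecidableEq ι]

lemma degreeOf_list_prod_ofFn_apply_le (i : τ) {m : ℕ}
    (M : Fin m → Matrix ι ι (MvPolynomial τ k)) (d : Fin m → ℕ)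
    (hM : ∀ j p q, degreeOf i (M j p q) ≤ d j) (p q : ι) :
    degreeOf i ((List.ofFn M).prod p q) ≤ ∑ j, d j := by
  induction m generalizing p with
  | zero =>
    rw [List.ofFn_zero, List.prod_nil, Matrix.one_apply]
    split_ifs <;> simp
  | succ m ih =>
    rw [List.ofFn_succ, List.prod_cons, Matrix.mul_apply, Fin.sum_univ_succ]
    exact (degreeOf_sum_le _ _ _).trans <| Finset.sup_le fun j _ =>
      (degreeOf_mul_le _ _ _).trans (Nat.add_le_add (hM 0 p j) (ih _ _ (fun l => hM l.succ) j))

lemma degreeOf_aeval_X_le [Nontrivial k] [DecidableEq τ] (i j : τ) (P : Polynomial k) :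
    degreeOf i (Polynomial.aeval (X j : MvPolynomial τ k) P) ≤
      if i = j then P.natDegree else 0 := by
  rw [Polynomial.aeval_eq_sum_range]
  refine (degreeOf_sum_le _ _ _).trans (Finset.sup_le fun e he => ?_)
  rw [smul_eq_C_mul]
  refine (degreeOf_C_mul_le _ _ _).trans ((degreeOf_pow_le _ _ _).trans ?_)
  rw [degreeOf_X]
  split_ifs
  · simpa using Finset.mem_range_succ_iff.1 he
  · simp

end MatrixProductDegree

section ProductOfPowers

/-- The product `L 0 ^ a 0 * L 1 ^ a 1 * ⋯` of the indicated powers, in this order. -/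
def prodPow {M : Type*} [Monoid M] {m : ℕ} (L : Fin m → M) (a : Fin m → ℕ) : M :=
  (List.ofFn fun i => L i ^ a i).prod

lemma prodPow_snoc {M : Type*} [Monoid M] {m : ℕ} (L : Fin m → M) (u : M) (a : Fin m → ℕ) (b : ℕ) :
    prodPow (Fin.snoc L u : Fin (m + 1) → M) (Fin.snoc a b : Fin (m + 1) → ℕ) =
      prodPow L a * u ^ b := by
  rw [prodPow, List.ofFn_succ', List.concat_eq_append, List.prod_append]
  simp [prodPow]

variable {k : Type*} [Field k] {ι : Type*} [Fintype ι] [DecidableEq ι] {m : ℕ}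

/-- The matrix of polynomials in `t₀, …, tₘ₋₁` which represents `L 0 ^ t₀ * ⋯ * L (m - 1) ^ tₘ₋₁`
when `(L i - 1) ^ d = 0` for all `i`. -/
def genericProdPow (d : ℕ) (L : Fin m → Matrix ι ι k) : Matrix ι ι (MvPolynomial (Fin m) k) :=
  (List.ofFn fun i => (unipotentPow d (L i)).map (Polynomial.aeval (X i))).prod

/-- The comorphism of the parametrization `t ↦ genericProdPow d L` of a set of matrices by an
affine space. -/
def prodPowComorphism (d : ℕ) (L : Fin m → Matrix ι ι k) :
    MvPolynomial (ι × ι) k →ₐ[k] MvPolynomial (Fin m) k :=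
  aeval fun p => genericProdPow d L p.1 p.2

lemma prodPowComorphism_X_mem_restrictDegree (d : ℕ) (L : Fin m → Matrix ι ι k) (p : ι × ι) :
    prodPowComorphism d L (X p) ∈ restrictDegree (Fin m) k (d - 1) := by
  rw [mem_restrictDegree_iff_degreeOf_le, prodPowComorphism, aeval_X]
  intro i
  refine (degreeOf_list_prod_ofFn_apply_le i _ (fun j => if i = j then d - 1 else 0)
    (fun j p q => (degreeOf_aeval_X_le i j _).trans ?_) p.1 p.2).trans (by simp)
  split_ifs
  · exact natDegree_unipotentPow_apply_le d _ p q
  · exact le_rfl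

variable [CharZero k] {d : ℕ} {L : Fin m → Matrix ι ι k} (hL : ∀ i, (L i - 1) ^ d = 0)
include hL

lemma eval_natCast_genericProdPow_apply (a : Fin m → ℕ) (p q : ι) :
    eval (fun i => (a i : k)) (genericProdPow d L p q) = prodPow L a p q := by
  have hmap : (eval fun i => (a i : k)).mapMatrix (genericProdPow d L) = prodPow L a := by
    rw [genericProdPow, map_list_prod, List.map_ofFn, prodPow]
    congr 2 with i p q
    change aeval (fun i => (a i : k)) (Polynomial.aeval (X i) (unipotentPow d (L i) p q)) = _
    rw [← Polynomial.aeval_algHom_apply, aeval_X, Polynomial.coe_aeval_eq_eval,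
      eval_natCast_unipotentPow_apply (hL i)]
  exact congrFun₂ hmap p q

lemma prodPowComorphism_eq_zero_iff (f : MvPolynomial (ι × ι) k) :
    prodPowComorphism d L f = 0 ↔
      ∀ a : Fin m → ℕ, eval (fun p => prodPow L a p.1 p.2) f = 0 := by
  have heval : ∀ a : Fin m → ℕ, eval (fun i => (a i : k)) (prodPowComorphism d L f) =
      eval (fun p => prodPow L a p.1 p.2) f := fun a => by
    simp only [prodPowComorphism, eval_aeval, eval_natCast_genericProdPow_apply hL]
  simp only [← heval]
  refine ⟨fun h a => by rw [h, map_zero], fun h => ?_⟩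
  refine MvPolynomial.funext_set (fun _ => Set.range (Nat.cast : ℕ → k))
    (fun _ => Set.infinite_range_of_injective Nat.cast_injective) fun x hx => ?_
  choose a ha using fun i => hx i (Set.mem_univ i)
  obtain rfl : (fun i => (a i : k)) = x := _root_.funext ha
  rw [h, map_zero]

end ProductOfPowers

lemma algebraicIndependent_cons_of_ker_le {k R B B₁ : Type*} [Field k] [CommRing R] [Algebra k R]
    [CommRing B] [IsDomain B] [Algebra k B] [CommRing B₁] [Algebra k B₁] {φ₁ : R →ₐ[k] B₁}
    {φ : R →ₐ[k] B} (hker : ∀ f, φ f = 0 → φ₁ f = 0) {m : ℕ} {g : Fin m → R}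
    (hg : AlgebraicIndependent k fun i => φ₁ (g i)) {f : R} (hf₁ : φ₁ f = 0) (hf : φ f ≠ 0) :
    AlgebraicIndependent k fun i => φ ((Fin.cons f g : Fin (m + 1) → R) i) := by
  rw [algebraicIndependent_iff]
  intro F hF
  rw [← comp_aeval_apply, aeval_cons_eq_eval₂_finSuccEquiv] at hF
  by_contra hF0
  have hP0 : finSuccEquiv k m F ≠ 0 := by simpa using hF0
  obtain ⟨Q, hQ, hQX⟩ := Polynomial.exists_eq_pow_rootMultiplicity_mul_and_not_dvd _ hP0 0
  rw [map_zero, sub_zero] at hQ hQX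
  rw [hQ, Polynomial.eval₂_mul, Polynomial.eval₂_pow, Polynomial.eval₂_X, map_mul, map_pow] at hF
  have hQf := hker _ ((mul_eq_zero.1 hF).resolve_left (pow_ne_zero _ hf))
  refine hQX (Polynomial.X_dvd_iff.2 (algebraicIndependent_iff.1 hg _ ?_))
  rw [← comp_aeval_apply, ← hQf]
  have hcomp := Polynomial.hom_eval₂ Q (aeval (R := k) g).toRingHom φ₁.toRingHom f
  rw [show φ₁.toRingHom f = 0 from hf₁, Polynomial.eval₂_at_zero] at hcomp
  exact hcomp.symm

section UnipotentParametrization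

variable {k : Type*} [CommRing k] {ι : Type*} [Fintype ι]

lemma le_card_sq_of_algebraicIndependent [IsDomain k] {m : ℕ} {B : Type*} [CommRing B] [Algebra k B]
    {φ : MvPolynomial (ι × ι) k →ₐ[k] B} {g : Fin m → MvPolynomial (ι × ι) k}
    (hg : AlgebraicIndependent k fun i => φ (g i)) : m ≤ Fintype.card ι ^ 2 := by
  have h := (AlgebraicIndependent.of_comp φ hg).lift_cardinalMk_le_trdeg
  rw [MvPolynomial.trdeg_of_isDomain] at h
  simpa only [Cardinal.mk_fintype, Cardinal.lift_natCast, Nat.cast_le, Fintype.card_fin,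
    Fintype.card_prod, ← sq] using h

/-- The comorphism of right translation by the matrix `u`. -/
def rightMulComorphism (u : Matrix ι ι k) :
    MvPolynomial (ι × ι) k →ₐ[k] MvPolynomial (ι × ι) k :=
  aeval fun p => (Matrix.mvPolynomialX ι ι k * u.map C : Matrix ι ι _) p.1 p.2

lemma eval_rightMulComorphism (u M : Matrix ι ι k) (f : MvPolynomial (ι × ι) k) :
    eval (fun p => M p.1 p.2) (rightMulComorphism u f) = eval (fun p => (M * u) p.1 p.2) f := by
  rw [rightMulComorphism, eval_aeval]
  congr 2
  simp [Matrix.mul_apply]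

variable {k : Type*} [Field k] [CharZero k] [DecidableEq ι] {d : ℕ} {S : Set (Matrix ι ι k)}
  (hS : ∀ u ∈ S, (u - 1) ^ d = 0)
include hS

lemma prodPowComorphism_eq_zero_of_snoc {m : ℕ} {L : Fin m → Matrix ι ι k} (hL : ∀ i, L i ∈ S)
    {u : Matrix ι ι k} (hu : u ∈ S) {f : MvPolynomial (ι × ι) k}
    (hf : prodPowComorphism d (Fin.snoc L u : Fin (m + 1) → Matrix ι ι k) f = 0) (b : ℕ) :
    prodPowComorphism d L (rightMulComorphism (u ^ b) f) = 0 := by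
  have hLu : ∀ i, ((Fin.snoc L u : Fin (m + 1) → Matrix ι ι k) i - 1) ^ d = 0 :=
    Fin.lastCases (by simpa using hS u hu) fun j => by simpa using hS _ (hL j)
  rw [prodPowComorphism_eq_zero_iff fun i => hS _ (hL i)]
  intro a
  rw [eval_rightMulComorphism, ← prodPow_snoc]
  exact (prodPowComorphism_eq_zero_iff hLu f).1 hf _

-- A family of maximal length works: if appending `u` destroyed some relation `f`, then `f` could
-- be added to the algebraically independent family.
lemma exists_algebraicIndependent_prodPowComorphism_maximal :
    ∃ (m : ℕ) (L : Fin m → Matrix ι ι k) (g : Fin m → MvPolynomial (ι × ι) k),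
      (∀ i, L i ∈ S) ∧ AlgebraicIndependent k (fun i => prodPowComorphism d L (g i)) ∧
      ∀ u ∈ S, ∀ f, prodPowComorphism d L f = 0 →
        prodPowComorphism d (Fin.snoc L u : Fin (m + 1) → Matrix ι ι k) f = 0 := by
  let lengths : Set ℕ := {m | ∃ (L : Fin m → Matrix ι ι k) (g : Fin m → MvPolynomial (ι × ι) k),
    (∀ i, L i ∈ S) ∧ AlgebraicIndependent k fun i => prodPowComorphism d L (g i)}
  have hzero : 0 ∈ lengths := ⟨Fin.elim0, Fin.elim0, fun i => i.elim0,
    algebraicIndependent_empty_type_iff.2 (algebraMap k _).injective⟩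
  have hbdd : BddAbove lengths :=
    ⟨Fintype.card ι ^ 2, fun m ⟨_, _, _, hg⟩ => le_card_sq_of_algebraicIndependent hg⟩
  obtain ⟨L, g, hL, hg⟩ := Nat.sSup_mem ⟨0, hzero⟩ hbdd
  refine ⟨sSup lengths, L, g, hL, hg, fun u hu f hf => ?_⟩
  by_contra hfu
  have hker : ∀ f', prodPowComorphism d (Fin.snoc L u : Fin (_ + 1) → Matrix ι ι k) f' = 0 →
      prodPowComorphism d L f' = 0 := fun f' hf' => by
    have h := prodPowComorphism_eq_zero_of_snoc hS hL hu hf' 0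
    rw [prodPowComorphism_eq_zero_iff fun i => hS _ (hL i)] at h ⊢
    simpa only [eval_rightMulComorphism, pow_zero, mul_one] using h
  have hlonger : sSup lengths + 1 ∈ lengths :=
    ⟨Fin.snoc L u, Fin.cons f g, Fin.lastCases (by simpa using hu) fun j => by simpa using hL j,
      algebraicIndependent_cons_of_ker_le hker hg hf hfu⟩
  exact absurd (le_csSup hbdd hlonger) (by lia)

lemma exists_parametrization_submonoidClosure :
    ∃ (m : ℕ) (φ : MvPolynomial (ι × ι) k →ₐ[k] MvPolynomial (Fin m) k)
      (g : Fin m → MvPolynomial (ι × ι) k),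
      m ≤ Fintype.card ι ^ 2 ∧ (∀ p, φ (X p) ∈ restrictDegree (Fin m) k (d - 1)) ∧
      AlgebraicIndependent k (fun i => φ (g i)) ∧
      ∀ f, φ f = 0 ↔ ∀ M ∈ Submonoid.closure S, eval (fun p => M p.1 p.2) f = 0 := by
  obtain ⟨m, L, g, hL, hg, hmax⟩ := exists_algebraicIndependent_prodPowComorphism_maximal hS
  have hker := fun f => prodPowComorphism_eq_zero_iff (fun i => hS _ (hL i)) f
  refine ⟨m, prodPowComorphism d L, g, le_card_sq_of_algebraicIndependent hg,
    prodPowComorphism_X_mem_restrictDegree d L, hg, fun f => ⟨fun hf M hM => ?_, fun hf => ?_⟩⟩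
  · induction hM using Submonoid.closure_induction_right generalizing f with
    | one => simpa [prodPow] using (hker f).1 hf 0
    | mul_right M _ u hu ih =>
      rw [← eval_rightMulComorphism]
      refine ih _ ?_
      simpa using prodPowComorphism_eq_zero_of_snoc hS hL hu (hmax u hu f hf) 1
  · refine (hker f).2 fun a => hf _ (Submonoid.list_prod_mem _ fun M hM => ?_)
    obtain ⟨i, rfl⟩ := (List.mem_ofFn' _ _).1 hM
    exact Submonoid.pow_mem _ (Submonoid.subset_closure (hL i)) _

end UnipotentParametrization

section GaloisDescent

variable {k K : Type*} [Field k] [Field K] [Algebra k K] {τ : Type*}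

/-- A space of polynomials is Galois stable if it is preserved by the action of the automorphisms
of `K` over `k` on the coefficients. -/
def IsGaloisStable (k : Type*) {K τ : Type*} [Field k] [Field K] [Algebra k K]
    (Z : Submodule K (MvPolynomial τ K)) : Prop :=
  ∀ s : K ≃ₐ[k] K, ∀ f ∈ Z, MvPolynomial.map (s : K →+* K) f ∈ Z

lemma support_sub_subset_erase [DecidableEq τ] {f g : MvPolynomial τ K} {a : τ →₀ ℕ}
    {t : Finset (τ →₀ ℕ)} (hf : f.support ⊆ t) (hg : g.support ⊆ t) (ha : coeff a f = coeff a g) :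
    (f - g).support ⊆ t.erase a := by
  refine Finset.subset_erase.2 ⟨(support_sub τ f g).trans (Finset.union_subset hf hg), ?_⟩
  rw [notMem_support_iff, coeff_sub, ha, sub_self]

variable [IsGalois k K] {Z : Submodule K (MvPolynomial τ K)}

-- A nonzero element of minimal support with a coefficient `1` is fixed by the Galois group, since
-- its differences with its conjugates have smaller support.
lemma exists_coeff_eq_one_coeff_mem_range_of_isGaloisStable (hZ : IsGaloisStable k Z)
    {f : MvPolynomial τ K} (hf : f ∈ Z) (hf0 : f ≠ 0) :
    ∃ f' ∈ Z, f'.support ⊆ f.support ∧ (∃ a ∈ f.support, coeff a f' = 1) ∧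
      ∀ b, coeff b f' ∈ Set.range (algebraMap k K) := by
  classical
  obtain ⟨f₁, ⟨hf₁, hf₁0, hf₁s⟩, hmin⟩ := WellFounded.has_min
    (measure fun f₁ : MvPolynomial τ K => f₁.support.card).wf
    {f₁ | f₁ ∈ Z ∧ f₁ ≠ 0 ∧ f₁.support ⊆ f.support} ⟨f, hf, hf0, subset_rfl⟩
  obtain ⟨a, ha⟩ := support_nonempty.2 hf₁0
  let f₂ := (coeff a f₁)⁻¹ • f₁
  have hf₂ : f₂ ∈ Z := Z.smul_mem _ hf₁
  have hf₂s : f₂.support ⊆ f₁.support := support_smul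
  have hf₂a : coeff a f₂ = 1 := inv_mul_cancel₀ (mem_support_iff.1 ha)
  refine ⟨f₂, hf₂, hf₂s.trans hf₁s, ⟨a, hf₁s ha, hf₂a⟩, fun b => ?_⟩
  refine (InfiniteGalois.mem_range_algebraMap_iff_fixed _).2 fun s => ?_
  have hfixed : MvPolynomial.map (s : K →+* K) f₂ = f₂ := by
    by_contra hne
    have hsub : (MvPolynomial.map (s : K →+* K) f₂ - f₂).support ⊆ f₁.support.erase a :=
      support_sub_subset_erase ((support_map_subset _ _).trans hf₂s) hf₂s <| by
        rw [coeff_map, hf₂a, map_one]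
    exact hmin _ ⟨Z.sub_mem (hZ s _ hf₂) hf₂, sub_ne_zero.2 hne,
      hsub.trans ((Finset.erase_subset _ _).trans hf₁s)⟩
      ((Finset.card_le_card hsub).trans_lt (Finset.card_erase_lt_of_mem ha))
  exact (coeff_map _ f₂ b).symm.trans (congrArg (coeff b) hfixed)

lemma exists_eval_ne_zero_coeff_mem_range_of_isGaloisStable (hZ : IsGaloisStable k Z) {p : τ → K}
    (f : MvPolynomial τ K) (hf : f ∈ Z) (hfp : eval p f ≠ 0) :
    ∃ f' ∈ Z, f'.support ⊆ f.support ∧ eval p f' ≠ 0 ∧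
      ∀ b, coeff b f' ∈ Set.range (algebraMap k K) := by
  classical
  obtain ⟨f₁, hf₁, hf₁s, ⟨a, ha, hf₁a⟩, hrat⟩ :=
    exists_coeff_eq_one_coeff_mem_range_of_isGaloisStable hZ hf (by rintro rfl; simp at hfp)
  by_cases hev : eval p f₁ = 0
  · have hsub : (f - coeff a f • f₁).support ⊆ f.support.erase a :=
      support_sub_subset_erase subset_rfl (support_smul.trans hf₁s) (by simp [hf₁a])
    have _ : (f - coeff a f • f₁).support.card < f.support.card :=
      (Finset.card_le_card hsub).trans_lt (Finset.card_erase_lt_of_mem ha)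
    obtain ⟨f', hf', hf's, h⟩ := exists_eval_ne_zero_coeff_mem_range_of_isGaloisStable hZ (p := p)
      (f - coeff a f • f₁) (Z.sub_mem hf (Z.smul_mem _ hf₁)) (by simpa [smul_eval, hev] using hfp)
    exact ⟨f', hf', hf's.trans (hsub.trans (Finset.erase_subset _ _)), h⟩
  · exact ⟨f₁, hf₁, hf₁s, hev, hrat⟩
termination_by f.support.card

end GaloisDescent

section ZariskiClosure

variable {σ τ : Type}

lemma subset_zariskiClosure (Y : Set (σ → Qbar)) : Y ⊆ zariskiClosure Y :=
  fun a ha _ hf => hf a ha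

lemma zariskiClosure_subset_zeroSet {Y : Set (σ → Qbar)} {I : Set (MvPolynomial σ Qbar)}
    (hY : Y ⊆ zeroSet I) : zariskiClosure Y ⊆ zeroSet I :=
  fun _ ha f hf => ha f fun _ hb => hY hb f hf

lemma mapsTo_eval_zariskiClosure {Y : Set (σ → Qbar)} {W : Set (τ → Qbar)}
    {t : τ → MvPolynomial σ Qbar}
    (ht : Set.MapsTo (fun a i => eval a (t i)) Y (zariskiClosure W)) :
    Set.MapsTo (fun a i => eval a (t i)) (zariskiClosure Y) (zariskiClosure W) := by
  intro a ha f hf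
  rw [← eval_aeval]
  exact ha _ fun b hb => by
    rw [eval_aeval]
    exact ht hb f hf

lemma isGalois_rat_Qbar : IsGalois ℚ Qbar := by
  -- `Algebra ℚ Qbar` has two instances here, equal only propositionally.
  have hgal : @IsGalois ℚ _ Qbar _ (AlgebraicClosure.instAlgebra ℚ) :=
    @IsAlgClosure.isGalois ℚ Qbar _ _ (AlgebraicClosure.instAlgebra ℚ) inferInstance _
  convert hgal
  exact Subsingleton.elim _ _

lemma eval_comp_map (s : Qbar →+* Qbar) (a : σ → Qbar) (f : MvPolynomial σ Qbar) :
    eval (fun i => s (a i)) (MvPolynomial.map s f) = s (eval a f) := by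
  rw [eval_map]
  exact (eval₂_comp s a f).symm

lemma comp_algEquiv_mem_of_definedOverQ {X : Set (σ → Qbar)} (hX : DefinedOverQ X)
    (s : Qbar ≃ₐ[ℚ] Qbar) {a : σ → Qbar} (ha : a ∈ X) : (fun i => s (a i)) ∈ X := by
  obtain ⟨I, rfl, hI⟩ := hX
  intro f hf
  have hfixed : MvPolynomial.map (s : Qbar →+* Qbar) f = f := by
    ext b
    obtain ⟨q, hq⟩ := hI f hf b
    rw [coeff_map, ← hq]
    exact s.commutes q
  have heval := eval_comp_map (s : Qbar →+* Qbar) a f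
  rw [hfixed, ha f hf, map_zero] at heval
  exact heval

lemma isGaloisStable_vanishingIdeal {Y : Set (σ → Qbar)}
    (hY : ∀ s : Qbar ≃ₐ[ℚ] Qbar, ∀ a ∈ Y, (fun i => s (a i)) ∈ Y) :
    IsGaloisStable ℚ ((vanishingIdeal Qbar Y).restrictScalars Qbar) := fun s f hf a ha => by
  have heval := eval_comp_map (s : Qbar →+* Qbar) (fun i => s.symm (a i)) f
  have hsymm : eval (fun i => s.symm (a i)) f = 0 := hf _ (hY s.symm a ha)
  rw [hsymm, map_zero] at heval
  simpa using heval

lemma boundedOverQ_zariskiClosure {Y : Set (σ → Qbar)} {d : ℕ}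
    (hY : ∀ s : Qbar ≃ₐ[ℚ] Qbar, ∀ a ∈ Y, (fun i => s (a i)) ∈ Y)
    (hsep : ∀ p, ∀ F ∈ vanishingIdeal Qbar Y, eval p F ≠ 0 →
      ∃ f ∈ vanishingIdeal Qbar Y, eval p f ≠ 0 ∧ f.totalDegree ≤ d) :
    BoundedOverQ (zariskiClosure Y) d := by
  refine ⟨{f | f ∈ vanishingIdeal Qbar Y ∧ f.totalDegree ≤ d ∧
    ∀ b, f.coeff b ∈ Set.range (algebraMap ℚ Qbar)}, ?_, fun f hf => hf.2⟩
  refine Set.Subset.antisymm (zariskiClosure_subset_zeroSet fun a ha f hf => hf.1 a ha) ?_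
  intro p hp F hF
  by_contra hFp
  obtain ⟨f, hf, hfp, hfd⟩ := hsep p F hF hFp
  have := isGalois_rat_Qbar
  obtain ⟨f', hf', hsupp, hf'p, hrat⟩ := exists_eval_ne_zero_coeff_mem_range_of_isGaloisStable
    (isGaloisStable_vanishingIdeal hY) f hf hfp
  exact hf'p (hp f' ⟨hf', (totalDegree_le_of_support_subset hsupp).trans hfd, hrat⟩)

end ZariskiClosure

section GeneralLinearGroup

variable {n : ℕ}

lemma glPoint_injective : Function.Injective (glPoint (n := n)) := fun g h hgh => by
  ext i j
  exact congrFun hgh (Sum.inl (i, j))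

lemma glPoint_map (s : Qbar →+* Qbar) (g : GL (Fin n) Qbar) :
    glPoint (Matrix.GeneralLinearGroup.map s g) = fun i => s (glPoint g i) := by
  ext (_ | _)
  · simp [glPoint]
  · simp only [glPoint, Sum.elim_inr, map_inv₀, RingHom.map_det]
    rfl

/-- A self-map of `GL_n` is regular if it is given by polynomials in the entries and the inverse of
the determinant. -/
def IsRegularMap (T : GL (Fin n) Qbar → GL (Fin n) Qbar) : Prop :=
  ∃ t : glIdx n → MvPolynomial (glIdx n) Qbar, ∀ g, glPoint (T g) = fun i => eval (glPoint g) (t i)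

lemma IsRegularMap.comp {T T' : GL (Fin n) Qbar → GL (Fin n) Qbar} (hT : IsRegularMap T)
    (hT' : IsRegularMap T') : IsRegularMap (T ∘ T') := by
  obtain ⟨t, ht⟩ := hT
  obtain ⟨t', ht'⟩ := hT'
  exact ⟨fun i => aeval t' (t i), fun g => by simp only [Function.comp_apply, ht, ht', eval_aeval]⟩

lemma isRegularMap_mul_right (u : GL (Fin n) Qbar) : IsRegularMap fun g => g * u := by
  refine ⟨Sum.elim (fun p => ∑ j, X (Sum.inl (p.1, j)) * C (u.val j p.2))
    (fun _ => X (Sum.inr ()) * C (u.val.det)⁻¹), fun g => ?_⟩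
  ext (_ | _) <;> simp [glPoint, Matrix.mul_apply, mul_comm]

lemma isRegularMap_mul_left (u : GL (Fin n) Qbar) : IsRegularMap fun g => u * g := by
  refine ⟨Sum.elim (fun p => ∑ j, C (u.val p.1 j) * X (Sum.inl (j, p.2)))
    (fun _ => X (Sum.inr ()) * C (u.val.det)⁻¹), fun g => ?_⟩
  ext (_ | _) <;> simp [glPoint, Matrix.mul_apply]

/-- The matrix of coordinate functions on the affine space which contains `GL_n`. -/
def coordinateMatrix (n : ℕ) : Matrix (Fin n) (Fin n) (MvPolynomial (glIdx n) Qbar) :=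
  Matrix.of fun i j => X (Sum.inl (i, j))

lemma map_eval_coordinateMatrix (a : glIdx n → Qbar) :
    (eval a).mapMatrix (coordinateMatrix n) = pointMatrix a := by
  ext i j
  simp [coordinateMatrix, pointMatrix]

lemma eval_det_coordinateMatrix (a : glIdx n → Qbar) :
    eval a (coordinateMatrix n).det = (pointMatrix a).det := by
  rw [RingHom.map_det, map_eval_coordinateMatrix]

lemma isRegularMap_inv : IsRegularMap fun g : GL (Fin n) Qbar => g⁻¹ := by
  refine ⟨Sum.elim (fun p => X (Sum.inr ()) * (coordinateMatrix n).adjugate p.1 p.2)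
    (fun _ => (coordinateMatrix n).det), fun g => ?_⟩
  have hg : pointMatrix (glPoint g) = g.val := rfl
  ext (p | _)
  · have hadj : eval (glPoint g) ((coordinateMatrix n).adjugate p.1 p.2) =
        g.val.adjugate p.1 p.2 := by
      rw [← hg, ← map_eval_coordinateMatrix, ← RingHom.map_adjugate]
      rfl
    simp only [Sum.elim_inl, map_mul, hadj, eval_X]
    simp [glPoint, Matrix.inv_def]
  · simp only [Sum.elim_inr, eval_det_coordinateMatrix, hg]
    simp [glPoint, Matrix.det_nonsing_inv]

lemma mem_range_glPoint_iff {a : glIdx n → Qbar} :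
    a ∈ Set.range glPoint ↔ eval a ((coordinateMatrix n).det * X (Sum.inr ()) - 1) = 0 := by
  rw [map_sub, map_mul, eval_det_coordinateMatrix, eval_X, map_one, sub_eq_zero]
  constructor
  · rintro ⟨g, rfl⟩
    exact mul_inv_cancel₀ (Matrix.isUnits_det_units g).ne_zero
  · intro ha
    refine ⟨Matrix.GeneralLinearGroup.mk'' (pointMatrix a) (IsUnit.of_mul_eq_one _ ha), ?_⟩
    ext (_ | _)
    · rfl
    · exact inv_eq_of_mul_eq_one_right ha

lemma zariskiClosure_subset_range_glPoint (S : Set (GL (Fin n) Qbar)) :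
    zariskiClosure (glPoint '' S) ⊆ Set.range glPoint := fun _ ha =>
  mem_range_glPoint_iff.2 <| ha _ <| Set.forall_mem_image.2 fun _ _ =>
    mem_range_glPoint_iff.1 (Set.mem_range_self _)

lemma glPoint_mem_zariskiClosure_of_isRegularMap {T : GL (Fin n) Qbar → GL (Fin n) Qbar}
    (hT : IsRegularMap T) {S : Set (GL (Fin n) Qbar)}
    (hS : ∀ x ∈ S, glPoint (T x) ∈ zariskiClosure (glPoint '' S)) {g : GL (Fin n) Qbar}
    (hg : glPoint g ∈ zariskiClosure (glPoint '' S)) :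
    glPoint (T g) ∈ zariskiClosure (glPoint '' S) := by
  obtain ⟨t, ht⟩ := hT
  rw [ht]
  refine mapsTo_eval_zariskiClosure (t := t) (Set.forall_mem_image.2 fun x hx => ?_) hg
  simpa only [ht] using hS x hx

/-- The Zariski closure of a subgroup of `GL_n`, as a subgroup. -/
def zariskiClosureSubgroup (H : Subgroup (GL (Fin n) Qbar)) : Subgroup (GL (Fin n) Qbar) where
  carrier := {g | glPoint g ∈ zariskiClosure (glPoint '' (H : Set (GL (Fin n) Qbar)))}
  one_mem' := subset_zariskiClosure _ ⟨1, H.one_mem, rfl⟩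
  mul_mem' {a _} ha hb :=
    glPoint_mem_zariskiClosure_of_isRegularMap (isRegularMap_mul_left a) (fun x hx =>
      glPoint_mem_zariskiClosure_of_isRegularMap (isRegularMap_mul_right x)
        (fun _ hy => subset_zariskiClosure _ ⟨_, H.mul_mem hy hx, rfl⟩) ha) hb
  inv_mem' ha :=
    glPoint_mem_zariskiClosure_of_isRegularMap isRegularMap_inv
      (fun _ hy => subset_zariskiClosure _ ⟨_, H.inv_mem hy, rfl⟩) ha

lemma image_glPoint_zariskiClosureSubgroup (H : Subgroup (GL (Fin n) Qbar)) :
    glPoint '' (zariskiClosureSubgroup H : Set (GL (Fin n) Qbar)) =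
      zariskiClosure (glPoint '' (H : Set (GL (Fin n) Qbar))) :=
  Set.image_preimage_eq_of_subset (zariskiClosure_subset_range_glPoint _)

lemma zariskiClosureSubgroup_le {H G : Subgroup (GL (Fin n) Qbar)}
    (hG : IsAlgebraicSet (glPoint '' (G : Set (GL (Fin n) Qbar)))) (hHG : H ≤ G) :
    zariskiClosureSubgroup H ≤ G := fun g hg => by
  obtain ⟨I, hI⟩ := hG
  have hgG : glPoint g ∈ glPoint '' (G : Set (GL (Fin n) Qbar)) :=
    hI ▸ zariskiClosure_subset_zeroSet (hI ▸ Set.image_mono hHG) hg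
  exact (glPoint_injective.mem_set_image).1 hgG

lemma conj_mem_zariskiClosureSubgroup {H : Subgroup (GL (Fin n) Qbar)} {g : GL (Fin n) Qbar}
    (hg : ∀ x ∈ H, g * x * g⁻¹ ∈ H) {u : GL (Fin n) Qbar} (hu : u ∈ zariskiClosureSubgroup H) :
    g * u * g⁻¹ ∈ zariskiClosureSubgroup H :=
  glPoint_mem_zariskiClosure_of_isRegularMap
    ((isRegularMap_mul_right g⁻¹).comp (isRegularMap_mul_left g))
    (fun x hx => subset_zariskiClosure _ ⟨_, hg x hx, rfl⟩) hu

end GeneralLinearGroup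

lemma succ_mul_pow_le_of_le_sq {m n : ℕ} (hm : m ≤ n ^ 2) :
    (m + 1) * ((n - 1) * (m + 1) + 1) ^ m ≤ (n ^ 3 + 1) ^ 2 ^ (3 * n ^ 2) := by
  have hsq : n ^ 2 ≤ n ^ 3 := by
    rcases n.eq_zero_or_pos with rfl | hn
    · simp
    · exact Nat.pow_le_pow_right hn (by lia)
  have hbase : (n - 1) * (m + 1) + 1 ≤ n ^ 3 + 1 := by
    rcases n with _ | c
    · simp
    · have : c * (m + 1) ≤ c * ((c + 1) ^ 2 + 1) := by gcongr
      rw [Nat.add_sub_cancel]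
      nlinarith
  have hexp : m + 1 ≤ 2 ^ (3 * n ^ 2) :=
    (show m + 1 ≤ 3 * n ^ 2 + 1 by lia).trans Nat.lt_two_pow_self
  calc (m + 1) * ((n - 1) * (m + 1) + 1) ^ m
      ≤ (n ^ 3 + 1) * (n ^ 3 + 1) ^ m :=
        Nat.mul_le_mul (by lia) (Nat.pow_le_pow_left hbase m)
    _ = (n ^ 3 + 1) ^ (m + 1) := (pow_succ' _ _).symm
    _ ≤ (n ^ 3 + 1) ^ 2 ^ (3 * n ^ 2) := Nat.pow_le_pow_right (Nat.succ_pos _) hexp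

section UnipotentSubgroup

lemma map_mem_closure_of_mapsTo {G : Type*} [Group G] {S : Set G} {f : G →* G}
    (hf : Set.MapsTo f S S) {x : G} (hx : x ∈ Subgroup.closure S) : f x ∈ Subgroup.closure S :=
  (Subgroup.closure_le ((Subgroup.closure S).comap f)).2
    (fun _ hy => Subgroup.subset_closure (hf hy)) hx

lemma det_eq_one_of_isNilpotent_sub_one {R ι : Type*} [CommRing R] [IsDomain R] [Fintype ι]
    [DecidableEq ι] {M : Matrix ι ι R} (hM : IsNilpotent (M - 1)) : M.det = 1 := by
  have hchar : (M - 1).charpoly = Polynomial.X ^ Fintype.card ι :=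
    sub_eq_zero.1 (Matrix.isNilpotent_charpoly_sub_pow_of_isNilpotent hM).eq_zero
  have heval := congrArg (Polynomial.eval (-1)) hchar
  have hneg : Matrix.scalar ι (-1 : R) - (M - 1) = -M := by
    rw [map_neg, map_one]
    abel
  rw [Matrix.eval_charpoly, hneg, Matrix.det_neg, Polynomial.eval_pow, Polynomial.eval_X] at heval
  exact (isUnit_neg_one.pow _).mul_left_cancel (heval.trans (mul_one _).symm)

variable {n : ℕ} {u : GL (Fin n) Qbar}

lemma IsUnipotent.inv (hu : IsUnipotent u) : IsUnipotent u⁻¹ := by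
  have hsub : (u⁻¹).val - 1 = -((u⁻¹).val * (u.val - 1)) := by
    rw [mul_sub, Units.inv_mul, mul_one, neg_sub]
  have hcomm : Commute (u⁻¹).val (u.val - 1) :=
    ((Commute.refl u).inv_left.units_val).sub_right (Commute.one_right _)
  rw [IsUnipotent, hsub, neg_pow, hcomm.mul_pow, show (u.val - 1) ^ n = 0 from hu, mul_zero,
    mul_zero]

lemma IsUnipotent.conj (hu : IsUnipotent u) (g : GL (Fin n) Qbar) :
    IsUnipotent (g * u * g⁻¹) := by
  have hsub : (g * u * g⁻¹).val - 1 = g.val * (u.val - 1) * (g⁻¹).val := by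
    rw [mul_sub, sub_mul, mul_one, Units.mul_inv]
    rfl
  rw [IsUnipotent, hsub, Units.conj_pow, show (u.val - 1) ^ n = 0 from hu, mul_zero, zero_mul]

lemma IsUnipotent.map (hu : IsUnipotent u) (s : Qbar →+* Qbar) :
    IsUnipotent (Matrix.GeneralLinearGroup.map s u) := by
  have hsub : (Matrix.GeneralLinearGroup.map s u).val - 1 = s.mapMatrix (u.val - 1) := by
    rw [map_sub, map_one]
    rfl
  rw [IsUnipotent, hsub, ← map_pow, show (u.val - 1) ^ n = 0 from hu, map_zero]

variable {S : Set (GL (Fin n) Qbar)} (hS : ∀ u ∈ S, IsUnipotent u)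
include hS

lemma glPoint_eq_of_mem_closure {h : GL (Fin n) Qbar} (hh : h ∈ Subgroup.closure S) :
    glPoint h = Sum.elim (fun p => h.val p.1 p.2) 1 := by
  have hker : Subgroup.closure S ≤ (Matrix.GeneralLinearGroup.det (n := Fin n)).ker :=
    (Subgroup.closure_le _).2 fun u hu =>
      Units.ext (det_eq_one_of_isNilpotent_sub_one ⟨n, hS u hu⟩)
  have hdet : h.val.det = 1 := congrArg Units.val (hker hh)
  rw [glPoint, hdet, inv_one]
  rfl

lemma exists_parametrization_closure (hinv : ∀ u ∈ S, u⁻¹ ∈ S) :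
    ∃ (m : ℕ) (φ : MvPolynomial (glIdx n) Qbar →ₐ[Qbar] MvPolynomial (Fin m) Qbar)
      (g : Fin m → MvPolynomial (glIdx n) Qbar),
      m ≤ n ^ 2 ∧ (∀ i, φ (X i) ∈ restrictDegree (Fin m) Qbar (n - 1)) ∧
      AlgebraicIndependent Qbar (fun i => φ (g i)) ∧
      ∀ f, φ f = 0 ↔
        f ∈ vanishingIdeal Qbar (glPoint '' (Subgroup.closure S : Set (GL (Fin n) Qbar))) := by
  let val : GL (Fin n) Qbar →* Matrix (Fin n) (Fin n) Qbar := Units.coeHom _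
  have hval : (Subgroup.closure S).toSubmonoid.map val = Submonoid.closure (val '' S) := by
    have hS_inv : S⁻¹ ⊆ S := fun u hu => inv_inv u ▸ hinv _ hu
    rw [Subgroup.closure_toSubmonoid, Set.union_eq_self_of_subset_right hS_inv,
      MonoidHom.map_mclosure]
  obtain ⟨m, φ, g, hm, hφ, hg, hker⟩ :=
    exists_parametrization_submonoidClosure (d := n) (Set.forall_mem_image.2 hS : ∀ M ∈ val '' S, _)
  let ψ : MvPolynomial (glIdx n) Qbar →ₐ[Qbar] MvPolynomial (Fin n × Fin n) Qbar :=
    aeval (Sum.elim X 1)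
  have hψ_eval : ∀ h ∈ Subgroup.closure S, ∀ f,
      eval (fun p => h.val p.1 p.2) (ψ f) = eval (glPoint h) f := fun h hh f => by
    rw [eval_aeval, glPoint_eq_of_mem_closure hS hh]
    congr 2
    ext (_ | _) <;> simp
  have hψ_rename : ∀ f, ψ (rename Sum.inl f) = f :=
    DFunLike.congr_fun (algHom_ext (f := ψ.comp (rename Sum.inl)) (g := .id _ _) fun p => by
      simp [ψ])
  refine ⟨m, φ.comp ψ, fun i => rename Sum.inl (g i), by simpa using hm, ?_, ?_, fun f => ?_⟩
  · rintro (p | _)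
    · simpa [ψ] using hφ p
    · simpa [ψ] using mem_restrictDegree_iff_degreeOf_le.2 fun i => by simp
  · simpa only [AlgHom.comp_apply, hψ_rename] using hg
  · rw [AlgHom.comp_apply, hker, ← hval, mem_vanishingIdeal_iff, Set.forall_mem_image]
    simp only [Submonoid.mem_map, forall_exists_index, and_imp, forall_apply_eq_imp_iff₂]
    exact forall₂_congr fun h hh => Eq.congr_left (hψ_eval h hh f)

lemma boundedOverQ_zariskiClosure_closure (hinv : ∀ u ∈ S, u⁻¹ ∈ S)
    (hgal : ∀ s : Qbar ≃ₐ[ℚ] Qbar, ∀ u ∈ S,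
      Matrix.GeneralLinearGroup.map (s : Qbar →+* Qbar) u ∈ S) :
    BoundedOverQ (zariskiClosure (glPoint '' (Subgroup.closure S : Set (GL (Fin n) Qbar))))
      ((n ^ 3 + 1) ^ 2 ^ (3 * n ^ 2)) := by
  obtain ⟨m, φ, g, hm, hφ, hg, hker⟩ := exists_parametrization_closure hS hinv
  refine boundedOverQ_zariskiClosure (fun s => Set.forall_mem_image.2 fun h hh => ?_) ?_
  · exact ⟨_, map_mem_closure_of_mapsTo (hgal s) hh, glPoint_map _ h⟩
  · intro p F hF hFp
    obtain ⟨f, hf, hfp, hfd⟩ := exists_totalDegree_le_eval_ne_zero hφ hg ((hker F).2 hF) hFp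
    exact ⟨f, (hker f).1 hf, hfp, hfd.trans (succ_mul_pow_le_of_le_sq hm)⟩

end UnipotentSubgroup

/-- **Unipotent-generated subgroup**: let `G` be a closed subgroup of `GL_n(ℚ̄)` defined
over `ℚ` and `U = Zcl(⟨unipotent elements of G⟩)`.  Then `U` is a normal subgroup of `G`
which is `(n³+1)^(2^(3n²))`-bounded over `ℚ`. -/
theorem stmt6 (n : ℕ) (G : Subgroup (GL (Fin n) Qbar))
    (hG : DefinedOverQ (glPoint '' (G : Set (GL (Fin n) Qbar)))) :
    ∃ U : Subgroup (GL (Fin n) Qbar),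
      glPoint '' (U : Set (GL (Fin n) Qbar)) =
        zariskiClosure (glPoint ''
          ((Subgroup.closure {g : GL (Fin n) Qbar | g ∈ G ∧ IsUnipotent g} :
            Subgroup (GL (Fin n) Qbar)) : Set (GL (Fin n) Qbar))) ∧
      U ≤ G ∧
      (∀ g ∈ G, ∀ u ∈ U, g * u * g⁻¹ ∈ U) ∧
      BoundedOverQ (glPoint '' (U : Set (GL (Fin n) Qbar)))
        ((n ^ 3 + 1) ^ (2 ^ (3 * n ^ 2))) := by
  set S := {g : GL (Fin n) Qbar | g ∈ G ∧ IsUnipotent g}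
  have hconj : ∀ g ∈ G, Set.MapsTo (MulAut.conj g).toMonoidHom S S := fun g hg u hu =>
    ⟨G.mul_mem (G.mul_mem hg hu.1) (G.inv_mem hg), hu.2.conj g⟩
  have hgal : ∀ s : Qbar ≃ₐ[ℚ] Qbar, ∀ u ∈ S,
      Matrix.GeneralLinearGroup.map (s : Qbar →+* Qbar) u ∈ S := fun s u hu => by
    refine ⟨glPoint_injective.mem_set_image.1 ?_, hu.2.map _⟩
    rw [glPoint_map]
    exact comp_algEquiv_mem_of_definedOverQ hG s ⟨u, hu.1, rfl⟩
  refine ⟨zariskiClosureSubgroup (Subgroup.closure S), image_glPoint_zariskiClosureSubgroup _,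
    zariskiClosureSubgroup_le ?_ ((Subgroup.closure_le G).2 fun _ hg => hg.1), ?_, ?_⟩
  · obtain ⟨I, hI, -⟩ := hG
    exact ⟨I, hI⟩
  · exact fun g hg u hu =>
      conj_mem_zariskiClosureSubgroup (fun x => map_mem_closure_of_mapsTo (hconj g hg)) hu
  · rw [image_glPoint_zariskiClosureSubgroup]
    exact boundedOverQ_zariskiClosure_closure (fun _ hu => hu.2)
      (fun _ hu => ⟨G.inv_mem hu.1, hu.2.inv⟩) hgal
end
end

section
/- There exists an absolute constant c ∈ ℕ such that the following holds for all n ≥ 1. For 1 ≤ i ≤ ℓ, let G_i = Zcl(⟨S_i⟩) be the Zariski closure in GL_n(ℚ̄) of the subgroup generated by a set S_i ⊆ GL_n(ℚ). If G₁ ⊊ G₂ ⊊ ⋯ ⊊ G_ℓ is a strictly increasing chain, then ℓ ≤ exp⁴(n^c). -/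
noncomputable section

open scoped MatrixGroups
open MvPolynomial

/-!
Give `GL_n(ℚ)` the Zariski topology of affine `(n² + 1)`-space. The groups `G_i` are determined by
the closures in `GL_n(ℚ)` of the groups generated by the `S_i`, so it suffices to bound chains of
closed subgroups of `GL_n(ℚ)`. If `K ≤ H` are closed and `[H : K]` is infinite, then
`dim K < dim H`; hence such a chain splits into at most `n² + 2` runs along which all indices are
finite.

Finite indices are bounded uniformly. For every large prime `p` the cosets of `K` in `H` have
representatives in `GL_n(ℤ_(p))`. If `g ∈ H ∩ GL_n(ℤ_(p))` reduces to `1` modulo `p`, then some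
power `g ^ k` with `k` prime to `p` lies in `K`, and `g` is a `p`-adic limit of powers of `g ^ k`,
so `g ∈ K`. Therefore `[H : K]` divides `|GL_n(𝔽_p)| = ∏ i < n, (p ^ n - p ^ i)` for all large `p`.
By Dirichlet's theorem on primes in arithmetic progressions the odd part of `[H : K]` also divides
this product at `p = 2` and the `2`-part divides it at `p = 3`, which gives
`[H : K] ≤ 2 ^ n² * 3 ^ n² ≤ 2 ^ (3 n²)`. The index at least doubles with each step of a chain, so
a run has at most `3 n² + 1` members.
-/

section Index

variable {G : Type*} [Group G]

theorem two_pow_le_relIndex_of_strictMono {m : ℕ} {K : Fin (m + 1) → Subgroup G}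
    (hK : StrictMono K) (h : (K 0).relIndex (K (Fin.last m)) ≠ 0) :
    2 ^ m ≤ (K 0).relIndex (K (Fin.last m)) := by
  induction m with
  | zero => exact Nat.one_le_iff_ne_zero.2 h
  | succ m ih =>
    have hlt : K (Fin.last m).castSucc < K (Fin.last (m + 1)) := hK (Fin.castSucc_lt_last _)
    have htower : (K 0).relIndex (K (Fin.last m).castSucc) *
        (K (Fin.last m).castSucc).relIndex (K (Fin.last (m + 1))) =
          (K 0).relIndex (K (Fin.last (m + 1))) :=
      Subgroup.relIndex_mul_relIndex _ _ _ (hK.monotone (Fin.zero_le _)) hlt.le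
    rw [← htower] at h ⊢
    have hinit : 2 ^ m ≤ (K 0).relIndex (K (Fin.last m).castSucc) :=
      ih (K := K ∘ Fin.castSucc) (hK.comp Fin.strictMono_castSucc) (left_ne_zero_of_mul h)
    have hlast : (K (Fin.last m).castSucc).relIndex (K (Fin.last (m + 1))) ≠ 1 := by
      rw [Ne, Subgroup.relIndex_eq_one]
      exact hlt.not_ge
    have := right_ne_zero_of_mul h
    rw [pow_succ]
    exact Nat.mul_le_mul hinit (by omega)

theorem relIndex_eq_ncard_orbit (K H : Subgroup G) :
    K.relIndex H = (MulAction.orbit H ((1 : G) : G ⧸ K)).ncard := by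
  rw [← MulAction.index_stabilizer, Subgroup.relIndex]
  congr 1
  ext x
  rw [Subgroup.mem_subgroupOf, MulAction.mem_stabilizer_iff]
  change _ ↔ (((x : G) * 1 : G) : G ⧸ K) = ((1 : G) : G ⧸ K)
  rw [mul_one, eq_comm, QuotientGroup.eq, inv_one, one_mul]

theorem relIndex_eq_of_forall_exists_inv_mul_mem {K A H : Subgroup G} (hAH : A ≤ H)
    (h : ∀ x ∈ H, ∃ a ∈ A, a⁻¹ * x ∈ K) : K.relIndex A = K.relIndex H := by
  rw [relIndex_eq_ncard_orbit, relIndex_eq_ncard_orbit]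
  congr 1
  refine Set.Subset.antisymm ?_ ?_
  · rintro _ ⟨a, rfl⟩
    exact ⟨⟨a, hAH a.2⟩, rfl⟩
  · rintro _ ⟨x, rfl⟩
    obtain ⟨a, ha, hax⟩ := h x x.2
    exact ⟨⟨a, ha⟩, QuotientGroup.eq.2 (by simpa using hax)⟩

theorem relIndex_dvd_card_of_ker_le {Γ F : Type*} [Group Γ] [Group F] {K H : Subgroup G}
    (ι : Γ →* G) (ρ : Γ →* F) (hcoset : ∀ x ∈ H, ∃ g, ι g ∈ H ∧ (ι g)⁻¹ * x ∈ K)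
    (hker : ∀ g ∈ ρ.ker, ι g ∈ H → ι g ∈ K) : K.relIndex H ∣ Nat.card F := by
  have hindex : (K.comap ι).relIndex (H.comap ι) = K.relIndex H := by
    rw [Subgroup.relIndex_comap]
    refine relIndex_eq_of_forall_exists_inv_mul_mem (Subgroup.map_comap_le _ _) fun x hx => ?_
    obtain ⟨g, hgH, hgx⟩ := hcoset x hx
    exact ⟨ι g, Subgroup.mem_map_of_mem ι hgH, hgx⟩
  calc K.relIndex H = (K.comap ι).relIndex (H.comap ι) := hindex.symm
    _ ∣ (ρ.ker ⊓ H.comap ι).relIndex (H.comap ι) :=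
      Subgroup.relIndex_dvd_of_le_left _ fun g hg => hker g hg.1 hg.2
    _ = Nat.card ((H.comap ι).map ρ) := by rw [Subgroup.inf_relIndex_right, Subgroup.relIndex_ker]
    _ ∣ Nat.card F := Subgroup.card_subgroup_dvd_card _

end Index

section NoetherianGroup

open Pointwise TopologicalSpace

theorem smul_mem_irreducibleComponents {M X : Type*} [Group M] [MulAction M X] [TopologicalSpace X]
    [ContinuousConstSMul M X] (g : M) {Z : Set X} (hZ : Z ∈ irreducibleComponents X) :
    g • Z ∈ irreducibleComponents X := by
  rw [← Set.preimage_smul_inv]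
  have hne : (Z ∩ Set.range (Homeomorph.smul g⁻¹ : X ≃ₜ X)).Nonempty := by
    simpa using hZ.1.nonempty
  exact preimage_mem_irreducibleComponents hZ (Homeomorph.smul g⁻¹ : X ≃ₜ X).isOpenEmbedding hne

theorem index_stabilizer_ne_zero_of_mem_irreducibleComponents {M X : Type*} [Group M]
    [MulAction M X] [TopologicalSpace X] [ContinuousConstSMul M X] [NoetherianSpace X] {Z : Set X}
    (hZ : Z ∈ irreducibleComponents X) : (MulAction.stabilizer M Z).index ≠ 0 := by
  have horbit : MulAction.orbit M Z ⊆ irreducibleComponents X :=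
    Set.range_subset_iff.2 fun g => smul_mem_irreducibleComponents g hZ
  have hfin : (MulAction.orbit M Z).Finite :=
    NoetherianSpace.finite_irreducibleComponents.subset horbit
  rw [MulAction.index_stabilizer]
  exact ((Set.ncard_pos hfin).2 (MulAction.nonempty_orbit Z)).ne'

variable {G : Type*} [Group G]

/-- The closure of a subgroup. Unlike `Subgroup.topologicalClosure` it does not need joint
continuity of the multiplication, which fails in Zariski topologies. -/
def separateTopologicalClosure [TopologicalSpace G] [SeparatelyContinuousMul G] [ContinuousInv G]
    (H : Subgroup G) : Subgroup G where
  __ := H.toSubmonoid.topologicalClosure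
  inv_mem' {g} hg := by
    have hmaps : Set.MapsTo (fun x : G => x⁻¹) H H := fun _ hx => H.inv_mem hx
    exact hmaps.closure continuous_inv hg

theorem stabilizer_le_of_subset {K : Subgroup G} {Z : Set G} (hZ : Z.Nonempty)
    (hZK : Z ⊆ K) : MulAction.stabilizer G Z ≤ K := by
  intro g hg
  obtain ⟨z, hz⟩ := hZ
  have hgz : g * z ∈ Z := by
    rw [← MulAction.mem_stabilizer_iff.1 hg]
    exact Set.smul_mem_smul_set hz
  exact (K.mul_mem_cancel_right (hZK hz)).1 (hZK hgz)

variable [TopologicalSpace G] [NoetherianSpace G] [SeparatelyContinuousMul G]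

theorem exists_irreducibleCloseds_gt {K : Subgroup G} (hK : K.index = 0) (Z : IrreducibleCloseds G)
    (hZK : (Z : Set G) ⊆ K) : ∃ Y : IrreducibleCloseds G, Z < Y := by
  have : ContinuousConstSMul G G := ⟨continuous_const_mul⟩
  obtain ⟨Y, hY, hZY⟩ :=
    exists_mem_irreducibleComponents_subset_of_isIrreducible (Z : Set G) Z.isIrreducible
  refine ⟨⟨Y, hY.1, isClosed_of_mem_irreducibleComponents Y hY⟩, lt_of_le_of_ne hZY ?_⟩
  rintro rfl
  have hdvd := Subgroup.index_dvd_of_le (stabilizer_le_of_subset hY.1.nonempty hZK)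
  rw [hK, zero_dvd_iff] at hdvd
  exact index_stabilizer_ne_zero_of_mem_irreducibleComponents hY hdvd

theorem succ_le_topologicalKrullDim_of_index_eq_zero {K : Subgroup G} (hK : IsClosed (K : Set G))
    (hindex : K.index = 0) {d : ℕ} (hd : d ≤ topologicalKrullDim K) :
    (d + 1 : ℕ) ≤ topologicalKrullDim G := by
  obtain ⟨s, rfl⟩ := Order.le_krullDim_iff.1 hd
  have hval : Topology.IsInducing (Subtype.val : K → G) := .subtypeVal
  let t := s.map _ (IrreducibleCloseds.map_strictMono_of_isInducing hval)
  have ht : (t.last : Set G) ⊆ K :=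
    closure_minimal (Set.image_subset_iff.2 fun x _ => x.2) hK
  obtain ⟨Y, hY⟩ := exists_irreducibleCloseds_gt hindex t.last ht
  exact Order.le_krullDim_iff.2 ⟨t.snoc Y hY, rfl⟩

theorem succ_le_topologicalKrullDim_of_relIndex_eq_zero {K H : Subgroup G} (hKH : K ≤ H)
    (hK : IsClosed (K : Set G)) (hindex : K.relIndex H = 0) {d : ℕ}
    (hd : d ≤ topologicalKrullDim K) : (d + 1 : ℕ) ≤ topologicalKrullDim H := by
  have hval : Topology.IsInducing (Subtype.val : H → G) := .subtypeVal
  have : NoetherianSpace H := hval.noetherianSpace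
  have : SeparatelyContinuousMul H :=
    { continuous_const_mul := (continuous_subtype_val.const_mul _).subtype_mk _
      continuous_mul_const := (continuous_subtype_val.mul_const _).subtype_mk _ }
  have hK' : Topology.IsInducing fun x : K => (⟨⟨x, hKH x.2⟩, x.2⟩ : K.subgroupOf H) :=
    (hval.comp .subtypeVal).of_comp_iff.1 .subtypeVal
  exact succ_le_topologicalKrullDim_of_index_eq_zero (hK.preimage continuous_subtype_val) hindex
    (hd.trans hK'.topologicalKrullDim_le)

theorem exists_natCast_eq_topologicalKrullDim {X : Type*} [TopologicalSpace X] [Nonempty X] {D : ℕ}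
    (hD : topologicalKrullDim X ≤ D) : ∃ d ≤ D, topologicalKrullDim X = d := by
  have : Nonempty (IrreducibleCloseds X) :=
    ⟨⟨closure {Classical.arbitrary X}, isIrreducible_singleton.closure, isClosed_closure⟩⟩
  have hnonneg : 0 ≤ topologicalKrullDim X := Order.krullDim_nonneg
  generalize topologicalKrullDim X = e at *
  induction e with
  | bot => simp at hnonneg
  | coe e =>
    lift e to ℕ using ne_top_of_le_ne_top (ENat.natCast_ne_top D) (by exact_mod_cast hD)
    exact ⟨e, by exact_mod_cast hD, rfl⟩

/-- Along a run of subgroups of equal dimension all indices are finite, so such a run has at most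
`b + 1` members. -/
theorem card_le_of_strictMono_of_relIndex_le {D b ℓ : ℕ} (hD : topologicalKrullDim G ≤ D)
    {K : Fin ℓ → Subgroup G} (hK : StrictMono K) (hclosed : ∀ i, IsClosed (K i : Set G))
    (hb : ∀ i j, (K i).relIndex (K j) ≠ 0 → (K i).relIndex (K j) ≤ 2 ^ b) :
    ℓ ≤ (b + 1) * (D + 1) := by
  have hdim (i : Fin ℓ) : ∃ d ≤ D, topologicalKrullDim (K i) = d :=
    exists_natCast_eq_topologicalKrullDim
      ((topologicalKrullDim_subspace_le G _).trans hD)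
  choose d hdD hd using hdim
  have hfiber (e : ℕ) : (Finset.univ.filter fun i => d i = e).card ≤ b + 1 := by
    by_contra! hcard
    let f := Finset.orderEmbOfCardLe _ hcard
    have hfe (j) : d (f j) = e := by
      simpa using Finset.orderEmbOfCardLe_mem _ hcard j
    have hKf : StrictMono (K ∘ f) := hK.comp f.strictMono
    have hne : (K (f 0)).relIndex (K (f (Fin.last (b + 1)))) ≠ 0 := by
      intro hzero
      have hlt := succ_le_topologicalKrullDim_of_relIndex_eq_zero
        (hKf.monotone (Fin.zero_le _)) (hclosed _) hzero (hd _).ge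
      simp only [Function.comp_apply, hd, hfe] at hlt
      exact (Nat.lt_succ_self e).not_ge (by exact_mod_cast hlt)
    have hpow := (two_pow_le_relIndex_of_strictMono hKf hne).trans (hb _ _ hne)
    exact (Nat.lt_succ_self b).not_ge ((Nat.pow_le_pow_iff_right one_lt_two).1 hpow)
  have hmaps : Set.MapsTo d (Finset.univ : Finset (Fin ℓ)) (Finset.range (D + 1)) := fun i _ =>
    Finset.mem_coe.2 (Finset.mem_range_succ_iff.2 (hdD i))
  simpa using Finset.card_le_mul_card_image_of_maps_to hmaps _ fun e _ => hfiber e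

end NoetherianGroup

section Arithmetic

theorem dvd_eval_of_forall_prime_gt {P : Polynomial ℤ} {d : ℕ} (hd : d ≠ 0)
    (h : ∀ᶠ p : ℕ in Filter.atTop, p.Prime → (d : ℤ) ∣ P.eval (p : ℤ)) {a : ℕ} (had : a.Coprime d) :
    (d : ℤ) ∣ P.eval (a : ℤ) := by
  obtain ⟨N, hN⟩ := Filter.eventually_atTop.1 h
  obtain ⟨p, hNp, hp, hpa⟩ := Nat.forall_exists_prime_gt_and_modEq N hd had
  have hsub : (d : ℤ) ∣ P.eval (p : ℤ) - P.eval (a : ℤ) :=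
    (Nat.modEq_iff_dvd.1 hpa.symm).trans (Polynomial.sub_dvd_eval_sub _ _ P)
  exact (dvd_sub_right (hN p hNp.le hp)).1 hsub

theorem natCast_prod_pow_sub_pow (n : ℕ) {q : ℕ} (hq : 0 < q) :
    ((∏ i : Fin n, (q ^ n - q ^ (i : ℕ)) : ℕ) : ℤ) =
      (∏ i : Fin n, ((Polynomial.X : Polynomial ℤ) ^ n - Polynomial.X ^ (i : ℕ))).eval (q : ℤ) := by
  simp [Polynomial.eval_prod, Nat.cast_sub (Nat.pow_le_pow_right hq (Fin.is_le' (n := n)))]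

theorem le_pow_of_forall_prime_gt_dvd_prod {n d a : ℕ} (hd : d ≠ 0)
    (h : ∀ᶠ p : ℕ in Filter.atTop, p.Prime → d ∣ ∏ i : Fin n, (p ^ n - p ^ (i : ℕ))) (ha : 1 < a)
    (had : a.Coprime d) : d ≤ a ^ n ^ 2 := by
  have hdvd : d ∣ ∏ i : Fin n, (a ^ n - a ^ (i : ℕ)) := by
    rw [← Int.natCast_dvd_natCast, natCast_prod_pow_sub_pow n (zero_lt_one.trans ha)]
    refine dvd_eval_of_forall_prime_gt hd (h.mono fun p hdvd hp => ?_) had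
    rw [← natCast_prod_pow_sub_pow n hp.pos, Int.natCast_dvd_natCast]
    exact hdvd hp
  have hpos : 0 < ∏ i : Fin n, (a ^ n - a ^ (i : ℕ)) :=
    Finset.prod_pos fun i _ => Nat.sub_pos_of_lt (Nat.pow_lt_pow_right ha i.2)
  calc d ≤ ∏ i : Fin n, (a ^ n - a ^ (i : ℕ)) := Nat.le_of_dvd hpos hdvd
    _ ≤ ∏ _i : Fin n, a ^ n := Finset.prod_le_prod' fun i _ => Nat.sub_le _ _
    _ = a ^ n ^ 2 := by simp [← pow_mul, sq]

theorem le_two_pow_of_forall_prime_gt_dvd_prod {n d : ℕ} (hd : d ≠ 0)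
    (h : ∀ᶠ p : ℕ in Filter.atTop, p.Prime → d ∣ ∏ i : Fin n, (p ^ n - p ^ (i : ℕ))) :
    d ≤ 2 ^ (3 * n ^ 2) := by
  obtain ⟨e, m, hm, rfl⟩ := Nat.exists_eq_two_pow_mul_odd hd
  have hodd : m ≤ 2 ^ n ^ 2 :=
    le_pow_of_forall_prime_gt_dvd_prod (right_ne_zero_of_mul hd)
      (h.mono fun p hdvd hp => (dvd_mul_left _ _).trans (hdvd hp)) one_lt_two
      (Nat.coprime_two_left.2 hm)
  have htwo : 2 ^ e ≤ 3 ^ n ^ 2 :=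
    le_pow_of_forall_prime_gt_dvd_prod (left_ne_zero_of_mul hd)
      (h.mono fun p hdvd hp => (dvd_mul_right _ _).trans (hdvd hp)) (by norm_num)
      (Nat.Coprime.pow_right _ (by norm_num))
  calc 2 ^ e * m ≤ 3 ^ n ^ 2 * 2 ^ n ^ 2 := Nat.mul_le_mul htwo hodd
    _ = 6 ^ n ^ 2 := (Nat.mul_pow 3 2 _).symm
    _ ≤ 8 ^ n ^ 2 := Nat.pow_le_pow_left (by norm_num) _
    _ = 2 ^ (3 * n ^ 2) := by rw [pow_mul]; norm_num

theorem two_mul_le_two_pow (n : ℕ) : 2 * n ≤ 2 ^ n := by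
  induction n with
  | zero => simp
  | succ n ih =>
    have := Nat.one_le_two_pow (n := n)
    omega

theorem mul_le_iexp_four (n : ℕ) : (3 * n ^ 2 + 1) * (n ^ 2 + 2) ≤ iexp 4 n := by
  have hexp : 4 * (n + 1) ≤ 2 ^ 2 ^ 2 ^ n :=
    calc 4 * (n + 1) = 2 * (2 * (n + 1)) := by ring
      _ ≤ 2 ^ (2 * (n + 1)) := two_mul_le_two_pow _
      _ ≤ 2 ^ 2 ^ (n + 1) := Nat.pow_le_pow_right two_pos (two_mul_le_two_pow _)
      _ ≤ 2 ^ 2 ^ 2 ^ n := by gcongr <;> simp [Nat.lt_two_pow_self]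
  calc (3 * n ^ 2 + 1) * (n ^ 2 + 2) ≤ (4 * (n + 1) ^ 2) * (4 * (n + 1) ^ 2) :=
        Nat.mul_le_mul (by nlinarith) (by nlinarith)
    _ = (2 * (n + 1)) ^ 4 := by ring
    _ ≤ (2 ^ (n + 1)) ^ 4 := Nat.pow_le_pow_left (two_mul_le_two_pow _) 4
    _ = 2 ^ (4 * (n + 1)) := by rw [← pow_mul, mul_comm]
    _ ≤ 2 ^ 2 ^ 2 ^ 2 ^ n := Nat.pow_le_pow_right two_pos hexp

end Arithmetic

section Coordinates

variable {n : ℕ} {R S : Type*} [CommRing R] [CommRing S]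

/-- The embedding `g ↦ (g, (det g)⁻¹)` of `GL_n(R)` into affine `(n² + 1)`-space over `R`. It
extends `glPoint` to all commutative rings, so that it can be reduced modulo prime powers. -/
def glCoords (g : GL (Fin n) R) : glIdx n → R :=
  Sum.elim (fun p => g p.1 p.2) fun _ => ((Matrix.GeneralLinearGroup.det g)⁻¹ : Rˣ)

theorem glPoint_eq_glCoords (g : GL (Fin n) Qbar) : glPoint g = glCoords g := by
  ext (_ | _) <;> simp [glPoint, glCoords]

theorem glCoords_map (φ : R →+* S) (g : GL (Fin n) R) :
    glCoords (Matrix.GeneralLinearGroup.map φ g) = φ ∘ glCoords g := by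
  ext (_ | _)
  · rfl
  · change ((Matrix.GeneralLinearGroup.det (Matrix.GeneralLinearGroup.map φ g))⁻¹ : Sˣ).val =
      (Units.map (φ : R →* S) (Matrix.GeneralLinearGroup.det g)⁻¹).val
    rw [Matrix.GeneralLinearGroup.map_det, map_inv]

theorem exists_map_eq_of_glCoords_mem_range {φ : R →+* S} (hφ : Function.Injective φ)
    {g : GL (Fin n) S} (hg : ∀ s, glCoords g s ∈ Set.range φ) :
    ∃ h, Matrix.GeneralLinearGroup.map φ h = g := by
  choose x hx using hg
  let M : Matrix (Fin n) (Fin n) R := .of fun i j => x (.inl (i, j))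
  have hM : φ.mapMatrix M = g := by
    ext i j
    exact hx _
  have hdet : M.det * x (.inr ()) = 1 := hφ <| by
    rw [map_mul, RingHom.map_det, hM, hx, map_one]
    exact (Matrix.GeneralLinearGroup.det g).mul_inv
  exact ⟨Matrix.GeneralLinearGroup.mk'' M (.of_mul_eq_one _ hdet), Units.ext hM⟩

end Coordinates

section ZariskiTopology

variable {n : ℕ} {K : Type*} [Field K]

/-- A copy of `GL_n(K)` that carries the Zariski topology; `GL_n(K)` itself already has the
topology induced by that of `K` when `K` is a topological field such as `ℚ`. -/
def ZariskiGL (n : ℕ) (K : Type*) [Field K] : Type _ :=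
  GL (Fin n) K

namespace ZariskiGL

instance : Group (ZariskiGL n K) :=
  inferInstanceAs (Group (GL (Fin n) K))

/-- The identification of `ZariskiGL n K` with `GL_n(K)`. -/
def toGL : ZariskiGL n K ≃* GL (Fin n) K :=
  MulEquiv.refl _

/-- The coordinates of a point of `ZariskiGL n K` in affine `(n² + 1)`-space. -/
def coords (g : ZariskiGL n K) : glIdx n → K :=
  glCoords (toGL g)

/-- The Zariski topology, pulled back from the spectrum of the polynomial ring in the coordinates
by sending `g` to the prime ideal of the polynomials that vanish at `g`. -/
instance : TopologicalSpace (ZariskiGL n K) :=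
  .induced (fun g => (pointToPoint (coords g) : PrimeSpectrum (MvPolynomial (glIdx n) K)))
    inferInstance

theorem isInducing_pointToPoint_coords : Topology.IsInducing fun g : ZariskiGL n K =>
    (pointToPoint (coords g) : PrimeSpectrum (MvPolynomial (glIdx n) K)) :=
  ⟨rfl⟩

instance : TopologicalSpace.NoetherianSpace (ZariskiGL n K) :=
  isInducing_pointToPoint_coords.noetherianSpace

theorem topologicalKrullDim_le : topologicalKrullDim (ZariskiGL n K) ≤ (n ^ 2 + 1 : ℕ) := by
  refine isInducing_pointToPoint_coords.topologicalKrullDim_le.trans ?_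
  rw [PrimeSpectrum.topologicalKrullDim_eq_ringKrullDim,
    MvPolynomial.ringKrullDim_of_isNoetherianRing, ringKrullDim_eq_zero_of_field]
  simp [sq]

theorem mem_closure_iff {s : Set (ZariskiGL n K)} {g : ZariskiGL n K} :
    g ∈ closure s ↔ coords g ∈ zeroLocus K (vanishingIdeal K (coords '' s)) := by
  rw [isInducing_pointToPoint_coords.closure_eq_preimage_closure_image, Set.mem_preimage,
    ← PrimeSpectrum.zeroLocus_vanishingIdeal_eq_closure, PrimeSpectrum.mem_zeroLocus,
    ← Set.image_image pointToPoint coords, vanishingIdeal_pointToPoint]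
  simp [pointToPoint, SetLike.le_def]

theorem continuous_of_coords_eq {T : ZariskiGL n K → ZariskiGL n K}
    {P : glIdx n → MvPolynomial (glIdx n) K}
    (hT : ∀ g, coords (T g) = fun s => aeval (coords g) (P s)) : Continuous T := by
  have haeval (g) (f : MvPolynomial (glIdx n) K) :
      aeval (coords (T g)) f = aeval (coords g) (bind₁ P f) := by
    rw [hT, aeval_bind₁]
  refine continuous_iff_image_closure_subset_closure_image.2 fun s => ?_
  rintro _ ⟨g, hg, rfl⟩
  refine mem_closure_iff.2 fun f hf => ?_
  rw [haeval]
  refine mem_closure_iff.1 hg _ ?_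
  rintro _ ⟨h, hh, rfl⟩
  rw [← haeval]
  exact hf _ ⟨T h, ⟨h, hh, rfl⟩, rfl⟩

instance : SeparatelyContinuousMul (ZariskiGL n K) where
  continuous_const_mul {g} := by
    refine continuous_of_coords_eq (P := Sum.elim
      (fun p => ∑ k, C (coords g (.inl (p.1, k))) * X (.inl (k, p.2)))
      fun u => C (coords g (.inr u)) * X (.inr u)) fun h => ?_
    ext (_ | _) <;> simp [coords, glCoords, Matrix.mul_apply, mul_comm]
  continuous_mul_const {g} := by
    refine continuous_of_coords_eq (P := Sum.elim
      (fun p => ∑ k, X (.inl (p.1, k)) * C (coords g (.inl (k, p.2))))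
      fun u => X (.inr u) * C (coords g (.inr u))) fun h => ?_
    ext (_ | _) <;> simp [coords, glCoords, Matrix.mul_apply, mul_comm]

/-- The matrix of coordinate functions. -/
def genericMatrix (n : ℕ) (K : Type*) [Field K] :
    Matrix (Fin n) (Fin n) (MvPolynomial (glIdx n) K) :=
  .of fun i j => X (.inl (i, j))

theorem mapMatrix_genericMatrix (g : ZariskiGL n K) :
    (aeval (coords g) : MvPolynomial (glIdx n) K →ₐ[K] K).mapMatrix (genericMatrix n K) =
      (toGL g : Matrix (Fin n) (Fin n) K) := by
  ext i j
  simp [genericMatrix, coords, glCoords]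

instance : ContinuousInv (ZariskiGL n K) where
  continuous_inv := by
    refine continuous_of_coords_eq (P := Sum.elim
      (fun p => X (.inr ()) * (genericMatrix n K).adjugate p.1 p.2)
      fun _ => (genericMatrix n K).det) fun g => ?_
    ext (p | _)
    · have hadj : aeval (coords g) ((genericMatrix n K).adjugate p.1 p.2) =
          (toGL g : Matrix (Fin n) (Fin n) K).adjugate p.1 p.2 := by
        rw [← mapMatrix_genericMatrix, ← AlgHom.map_adjugate]
        rfl
      rw [Sum.elim_inl, map_mul, aeval_X, hadj]
      simp [coords, glCoords, Matrix.inv_def]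
    · rw [Sum.elim_inr, AlgHom.map_det, mapMatrix_genericMatrix]
      simp [coords, glCoords]

end ZariskiGL

end ZariskiTopology

section Congruence

theorem natCast_pow_succ_dvd_pow_sub_one {A : Type*} [Ring A] {p : ℕ} {a : A}
    (h : (p : A) ∣ a - 1) (k : ℕ) : (p : A) ^ (k + 1) ∣ a ^ p ^ k - 1 := by
  obtain ⟨x, hx⟩ := h
  have hX : (p : Polynomial ℤ) ^ (k + 1) ∣
      (1 + (p : Polynomial ℤ) * Polynomial.X) ^ p ^ k - 1 ^ p ^ k :=
    dvd_sub_pow_of_dvd_sub (by simp) k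
  simpa [← hx] using map_dvd (Polynomial.aeval x) hX

variable {n : ℕ} {R : Type*} [CommRing R]

theorem map_eq_one_iff_dvd_sub_one {S : Type*} [CommRing S] {φ : R →+* S} {q : ℕ}
    (hφ : RingHom.ker φ = Ideal.span {(q : R)}) {g : GL (Fin n) R} :
    Matrix.GeneralLinearGroup.map φ g = 1 ↔
      (q : Matrix (Fin n) (Fin n) R) ∣ (g : Matrix (Fin n) (Fin n) R) - 1 := by
  have hentry (i j) : φ (g i j) = (1 : Matrix (Fin n) (Fin n) S) i j ↔
      (q : R) ∣ ((g : Matrix (Fin n) (Fin n) R) - 1) i j := by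
    rw [← Ideal.mem_span_singleton, ← hφ, RingHom.mem_ker, Matrix.sub_apply, map_sub, sub_eq_zero,
      Matrix.one_apply, Matrix.one_apply]
    split_ifs <;> simp
  simp only [Matrix.GeneralLinearGroup.ext_iff, Matrix.GeneralLinearGroup.map_apply,
    Matrix.GeneralLinearGroup.coe_one, hentry]
  constructor
  · intro h
    choose X hX using h
    exact ⟨.of X, by ext i j; simp [hX, ← nsmul_eq_mul]⟩
  · rintro ⟨X, hX⟩ i j
    exact ⟨X i j, by rw [hX, ← nsmul_eq_mul, ← nsmul_eq_mul, Matrix.smul_apply]⟩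

variable {p : ℕ} {g : GL (Fin n) R}

theorem map_quotientMk_pow_eq_one
    (hg : (p : Matrix (Fin n) (Fin n) R) ∣ (g : Matrix (Fin n) (Fin n) R) - 1) (m : ℕ) :
    Matrix.GeneralLinearGroup.map (Ideal.Quotient.mk (Ideal.span {(p : R)} ^ (m + 1))) g ^ p ^ m =
      1 := by
  have hker : RingHom.ker (Ideal.Quotient.mk (Ideal.span {(p : R)} ^ (m + 1))) =
      Ideal.span {((p ^ (m + 1) : ℕ) : R)} := by
    rw [Ideal.mk_ker, Ideal.span_singleton_pow, Nat.cast_pow]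
  rw [← map_pow, map_eq_one_iff_dvd_sub_one hker, Nat.cast_pow, Units.val_pow_eq_pow_val]
  exact natCast_pow_succ_dvd_pow_sub_one hg m

theorem exists_map_quotientMk_pow_mul_eq
    (hg : (p : Matrix (Fin n) (Fin n) R) ∣ (g : Matrix (Fin n) (Fin n) R) - 1) {k : ℕ}
    (hk : k.Coprime p) (m : ℕ) : ∃ j,
      Matrix.GeneralLinearGroup.map (Ideal.Quotient.mk (Ideal.span {(p : R)} ^ (m + 1)))
          (g ^ (k * j)) =
        Matrix.GeneralLinearGroup.map (Ideal.Quotient.mk (Ideal.span {(p : R)} ^ (m + 1))) g := by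
  have hcoprime : k.Coprime (orderOf (Matrix.GeneralLinearGroup.map
      (Ideal.Quotient.mk (Ideal.span {(p : R)} ^ (m + 1))) g)) :=
    (hk.pow_right m).of_dvd_right (orderOf_dvd_of_pow_eq_one (map_quotientMk_pow_eq_one hg m))
  obtain ⟨j, hj⟩ := exists_pow_eq_self_of_coprime hcoprime
  exact ⟨j, by rw [map_pow, pow_mul, hj]⟩

theorem eval_glCoords_eq_zero_of_forall_pow [IsDomain R] [IsNoetherianRing R]
    (hp : ¬IsUnit (p : R))
    (hg : (p : Matrix (Fin n) (Fin n) R) ∣ (g : Matrix (Fin n) (Fin n) R) - 1) {k : ℕ}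
    (hk : k.Coprime p) {f : MvPolynomial (glIdx n) R}
    (hf : ∀ j, eval (glCoords (g ^ (k * j))) f = 0) : eval (glCoords g) f = 0 := by
  have hmem (m : ℕ) : eval (glCoords g) f ∈ Ideal.span {(p : R)} ^ (m + 1) := by
    obtain ⟨j, hj⟩ := exists_map_quotientMk_pow_mul_eq hg hk m
    rw [← Ideal.Quotient.eq_zero_iff_mem, map_eval, ← glCoords_map, ← hj, glCoords_map, ← map_eval,
      hf, map_zero]
  have hbot : ⨅ m : ℕ, Ideal.span {(p : R)} ^ m = ⊥ :=
    Ideal.iInf_pow_eq_bot_of_isDomain _ (by rwa [Ne, Ideal.span_singleton_eq_top])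
  rw [← Ideal.mem_bot, ← hbot, Ideal.mem_iInf]
  exact fun m => Ideal.pow_le_pow_right m.le_succ (hmem m)

end Congruence

section FractionRing

variable {n : ℕ} {R K : Type*} [CommRing R] [Field K] [Algebra R K]

theorem exists_C_mul_eq_map_algebraMap [IsDomain R] [IsFractionRing R K] {σ : Type*}
    (f : MvPolynomial σ K) : ∃ c : R, c ≠ 0 ∧ ∃ F : MvPolynomial σ R,
      C (algebraMap R K c) * f = map (algebraMap R K) F := by
  let := MvPolynomial.algebraMvPolynomial (σ := σ) (R := R) (S := K)
  have := MvPolynomial.isLocalization (σ := σ) (nonZeroDivisors R) K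
  obtain ⟨⟨F, s⟩, hs⟩ :=
    IsLocalization.surj ((nonZeroDivisors R).map (C : R →+* MvPolynomial σ R)) f
  obtain ⟨c, hc, hcs⟩ := s.2
  refine ⟨c, nonZeroDivisors.ne_zero hc, F, ?_⟩
  rw [← map_C, mul_comm]
  simpa [← hcs] using hs

theorem mem_zeroLocus_vanishingIdeal_of_forall_eval [IsDomain R] [IsFractionRing R K] {σ : Type*}
    {T : Set (σ → R)} {x : σ → R}
    (h : ∀ F : MvPolynomial σ R, (∀ y ∈ T, eval y F = 0) → eval x F = 0) :
    algebraMap R K ∘ x ∈ zeroLocus K (vanishingIdeal K ((algebraMap R K ∘ ·) '' T)) := by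
  intro f hf
  obtain ⟨c, hc, F, hF⟩ := exists_C_mul_eq_map_algebraMap (R := R) f
  have heval (y : σ → R) :
      algebraMap R K c * aeval (algebraMap R K ∘ y) f = algebraMap R K (eval y F) := by
    rw [map_eval, ← hF, eval_mul, eval_C, aeval_eq_eval]
  have hx : eval x F = 0 := by
    refine h F fun y hy => IsFractionRing.injective R K ?_
    rw [← heval, hf _ ⟨y, hy, rfl⟩, mul_zero, map_zero]
  have hzero := heval x
  rw [hx, map_zero, mul_eq_zero] at hzero
  exact hzero.resolve_left ((IsFractionRing.to_map_eq_zero_iff).not.2 hc)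

namespace ZariskiGL

variable (K) in
/-- The map from `GL_n(R)` to `GL_n(K)` induced by `R → K`. -/
def ofGL : GL (Fin n) R →* ZariskiGL n K :=
  (toGL (K := K)).symm.toMonoidHom.comp (Matrix.GeneralLinearGroup.map (algebraMap R K))

theorem coords_ofGL (g : GL (Fin n) R) : coords (ofGL K g) = algebraMap R K ∘ glCoords g :=
  glCoords_map _ _

variable [IsDomain R] [IsNoetherianRing R] [IsFractionRing R K]
  {F : Type*} [CommRing F] [Nontrivial F] {p : ℕ} {φ : R →+* F}

/-- Some powers of `g ^ k` converge `p`-adically to `g`, and Zariski closed sets are `p`-adically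
closed. -/
theorem ofGL_mem_of_ofGL_pow_mem (hφ : RingHom.ker φ = Ideal.span {(p : R)})
    {Z : Subgroup (ZariskiGL n K)} (hZ : IsClosed (Z : Set (ZariskiGL n K)))
    {g : GL (Fin n) R} (hg : Matrix.GeneralLinearGroup.map φ g = 1) {k : ℕ} (hk : k.Coprime p)
    (hgk : ofGL K g ^ k ∈ Z) : ofGL K g ∈ Z := by
  have hp : ¬IsUnit (p : R) := by
    rw [← Ideal.span_singleton_eq_top, ← hφ]
    exact RingHom.ker_ne_top φ
  have hlimit : coords (ofGL K g) ∈ zeroLocus K (vanishingIdeal K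
      ((algebraMap R K ∘ ·) '' Set.range fun j : ℕ => glCoords (g ^ (k * j)))) := by
    rw [coords_ofGL]
    refine mem_zeroLocus_vanishingIdeal_of_forall_eval fun f hf => ?_
    exact eval_glCoords_eq_zero_of_forall_pow hp ((map_eq_one_iff_dvd_sub_one hφ).1 hg) hk
      fun j => hf _ ⟨j, rfl⟩
  rw [← SetLike.mem_coe, ← hZ.closure_eq, mem_closure_iff]
  refine zeroLocus_anti_mono (vanishingIdeal_anti_mono ?_) hlimit
  rintro _ ⟨_, ⟨j, rfl⟩, rfl⟩
  refine ⟨ofGL K (g ^ (k * j)), ?_, coords_ofGL _⟩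
  rw [pow_mul, map_pow, map_pow]
  exact Z.pow_mem hgk j

theorem relIndex_dvd_card (hφ : RingHom.ker φ = Ideal.span {(p : R)}) (hp : p.Prime)
    {Z H : Subgroup (ZariskiGL n K)} (hZ : IsClosed (Z : Set (ZariskiGL n K)))
    (hindex : Z.relIndex H ≠ 0) (hlt : Z.relIndex H < p)
    (hcoset : ∀ x ∈ H, ∃ g : GL (Fin n) R, ofGL K g ∈ H ∧ (ofGL K g)⁻¹ * x ∈ Z) :
    Z.relIndex H ∣ Nat.card (GL (Fin n) F) := by
  refine relIndex_dvd_card_of_ker_le (ofGL K) (Matrix.GeneralLinearGroup.map φ) hcoset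
    fun g hg hgH => ?_
  obtain ⟨k, hk, hkle, hgk⟩ := Subgroup.exists_pow_mem_of_relIndex_ne_zero hindex hgH
  exact ofGL_mem_of_ofGL_pow_mem hφ hZ hg
    (Nat.coprime_of_lt_prime hk.ne' (hkle.trans_lt hlt) hp).symm hgk.1

end ZariskiGL

end FractionRing

section LocalizedInt

theorem ker_isLocalizationLift {R S P : Type*} [CommRing R] [CommRing S] [Algebra R S] [CommRing P]
    {M : Submonoid R} [IsLocalization M S] {f : R →+* P} (hf : ∀ y : M, IsUnit (f y)) :
    RingHom.ker (IsLocalization.lift hf : S →+* P) = (RingHom.ker f).map (algebraMap R S) := by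
  refine le_antisymm (fun x hx => ?_) (Ideal.map_le_iff_le_comap.2 fun a ha => ?_)
  · obtain ⟨a, s, rfl⟩ := IsLocalization.exists_mk'_eq M x
    rw [IsLocalization.mk'_mem_iff] at hx ⊢
    refine Ideal.mem_map_of_mem _ ?_
    rwa [RingHom.mem_ker, IsLocalization.lift_eq] at hx
  · rwa [Ideal.mem_comap, RingHom.mem_ker, IsLocalization.lift_eq]

/-- The multiplicative set of integers that are invertible modulo `p`. -/
def unitsModNat (p : ℕ) : Submonoid ℤ :=
  (IsUnit.submonoid (ZMod p)).comap (Int.castRingHom (ZMod p))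

theorem mem_unitsModNat {p : ℕ} {a : ℤ} :
    a ∈ unitsModNat p ↔ IsUnit (Int.castRingHom (ZMod p) a) :=
  Iff.rfl

variable (p : ℕ) [Fact p.Prime]

theorem unitsModNat_le_nonZeroDivisors : unitsModNat p ≤ nonZeroDivisors ℤ := by
  refine le_nonZeroDivisors_of_noZeroDivisors fun h => ?_
  rw [mem_unitsModNat, map_zero] at h
  exact not_isUnit_zero h

/-- The local ring `ℤ_(p)` of rational numbers with denominator prime to `p`. -/
abbrev localizedInt : Subalgebra ℤ ℚ :=
  Localization.subalgebra.ofField ℚ (unitsModNat p) (unitsModNat_le_nonZeroDivisors p)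

instance : IsNoetherianRing (localizedInt p) :=
  IsLocalization.isNoetherianRing (unitsModNat p) _ inferInstance

/-- Reduction modulo `p` on `ℤ_(p)`. -/
def localizedIntToZMod : localizedInt p →+* ZMod p :=
  IsLocalization.lift fun y : unitsModNat p => mem_unitsModNat.1 y.2

theorem ker_localizedIntToZMod :
    RingHom.ker (localizedIntToZMod p) = Ideal.span {(p : localizedInt p)} := by
  rw [localizedIntToZMod, ker_isLocalizationLift, ZMod.ker_intCastRingHom, Ideal.map_span,
    Set.image_singleton, map_natCast]

variable {p} in
theorem mem_localizedInt_of_den_lt {q : ℚ} (hq : q.den < p) : q ∈ localizedInt p := by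
  refine ⟨q.num, q.den, ?_, ?_⟩
  · rw [mem_unitsModNat, map_natCast, ZMod.isUnit_iff_coprime]
    exact (Nat.coprime_of_lt_prime q.den_ne_zero hq Fact.out).symm
  · simp [← div_eq_mul_inv, Rat.num_div_den]

end LocalizedInt

section FiniteIndex

namespace ZariskiGL

variable {n : ℕ}

theorem eventually_exists_ofGL_eq (g : ZariskiGL n ℚ) : ∀ᶠ p : ℕ in Filter.atTop,
    ∀ _ : Fact p.Prime, ∃ h : GL (Fin n) (localizedInt p), ofGL ℚ h = g := by
  have hden : ∀ᶠ p : ℕ in Filter.atTop, ∀ s, (coords g s).den < p :=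
    Filter.eventually_all.2 fun s => Filter.eventually_gt_atTop _
  filter_upwards [hden] with p hp _
  exact exists_map_eq_of_glCoords_mem_range (g := toGL g)
    (IsFractionRing.injective (localizedInt p) ℚ)
    fun s => ⟨⟨_, mem_localizedInt_of_den_lt (hp s)⟩, rfl⟩

theorem eventually_relIndex_dvd_prod {Z H : Subgroup (ZariskiGL n ℚ)}
    (hZ : IsClosed (Z : Set (ZariskiGL n ℚ))) (hindex : Z.relIndex H ≠ 0) :
    ∀ᶠ p : ℕ in Filter.atTop, p.Prime → Z.relIndex H ∣ ∏ i : Fin n, (p ^ n - p ^ (i : ℕ)) := by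
  have : Finite (H ⧸ Z.subgroupOf H) := (Subgroup.fintypeOfIndexNeZero hindex).finite
  have hcoset : ∀ᶠ p : ℕ in Filter.atTop, ∀ c : H ⧸ Z.subgroupOf H,
      ∀ _ : Fact p.Prime, ∃ h : GL (Fin n) (localizedInt p), ofGL ℚ h = c.out :=
    Filter.eventually_all.2 fun c => eventually_exists_ofGL_eq _
  filter_upwards [hcoset, Filter.eventually_gt_atTop (Z.relIndex H)] with p hp hlt hprime
  have hfact : Fact p.Prime := ⟨hprime⟩
  have hdvd := relIndex_dvd_card (ker_localizedIntToZMod p) hprime hZ hindex hlt fun x hx => by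
    let y : H := ⟨x, hx⟩
    obtain ⟨g, hg⟩ := hp (y : H ⧸ Z.subgroupOf H) hfact
    have hmem : (y : H ⧸ Z.subgroupOf H).out⁻¹ * y ∈ Z.subgroupOf H :=
      QuotientGroup.eq.1 (QuotientGroup.out_eq' _)
    exact ⟨g, by simp [hg], by rwa [hg]⟩
  rwa [Matrix.card_GL_field, ZMod.card] at hdvd

theorem relIndex_le_two_pow {Z H : Subgroup (ZariskiGL n ℚ)}
    (hZ : IsClosed (Z : Set (ZariskiGL n ℚ))) (hindex : Z.relIndex H ≠ 0) :
    Z.relIndex H ≤ 2 ^ (3 * n ^ 2) :=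
  le_two_pow_of_forall_prime_gt_dvd_prod hindex (eventually_relIndex_dvd_prod hZ hindex)

end ZariskiGL

end FiniteIndex

section FieldExtension

variable {K L : Type*} [Field K] [Field L] [Algebra K L]

theorem exists_forall_eval_eq_dual_eval {σ : Type*} (φ : Module.Dual K L) (f : MvPolynomial σ L) :
    ∃ F : MvPolynomial σ K, ∀ x, eval x F = φ (eval (algebraMap K L ∘ x) f) := by
  induction f using MvPolynomial.induction_on' with
  | monomial m a =>
    refine ⟨monomial m (φ a), fun x => ?_⟩
    have hprod : (m.prod fun i e => (algebraMap K L ∘ x) i ^ e) =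
        algebraMap K L (m.prod fun i e => x i ^ e) := by
      simp [map_finsuppProd]
    rw [eval_monomial, eval_monomial, hprod, mul_comm a, ← Algebra.smul_def, map_smul, smul_eq_mul,
      mul_comm]
  | add f g hf hg =>
    obtain ⟨F, hF⟩ := hf
    obtain ⟨G, hG⟩ := hg
    exact ⟨F + G, fun x => by rw [map_add, map_add, map_add, hF, hG]⟩

theorem algebraMap_comp_mem_zeroLocus_vanishingIdeal_iff {σ : Type*} {s : Set (σ → K)}
    {x : σ → K} :
    algebraMap K L ∘ x ∈ zeroLocus L (vanishingIdeal L ((algebraMap K L ∘ ·) '' s)) ↔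
      x ∈ zeroLocus K (vanishingIdeal K s) := by
  constructor
  · intro hx f hf
    have hmap (y : σ → K) : aeval (algebraMap K L ∘ y) (map (algebraMap K L) f) =
        algebraMap K L (aeval y f) := by
      rw [aeval_eq_eval, ← map_eval, aeval_eq_eval]
    refine (algebraMap K L).injective ?_
    rw [← hmap, map_zero]
    refine hx _ ?_
    rintro _ ⟨y, hy, rfl⟩
    rw [hmap, hf y hy, map_zero]
  · intro hx f hf
    rw [← Module.forall_dual_apply_eq_zero_iff K]
    intro φ
    obtain ⟨F, hF⟩ := exists_forall_eval_eq_dual_eval φ f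
    rw [aeval_eq_eval, ← hF]
    refine hx F fun y hy => ?_
    rw [aeval_eq_eval, hF]
    exact (congrArg φ (hf _ ⟨y, hy, rfl⟩)).trans (map_zero φ)

variable {n : ℕ}

variable (L) in
/-- The inclusion of `GL_n(K)` into `GL_n(L)`. -/
def ZariskiGL.baseChange : ZariskiGL n K →* GL (Fin n) L :=
  (Matrix.GeneralLinearGroup.map (algebraMap K L)).comp ZariskiGL.toGL.toMonoidHom

theorem ZariskiGL.glCoords_baseChange (g : ZariskiGL n K) :
    glCoords (baseChange L g) = algebraMap K L ∘ coords g :=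
  glCoords_map _ _

theorem ZariskiGL.exists_baseChange_eq {g : GL (Fin n) L}
    (hg : ∀ i j, g i j ∈ Set.range (algebraMap K L)) : ∃ h : ZariskiGL n K, baseChange L h = g := by
  refine exists_map_eq_of_glCoords_mem_range (algebraMap K L).injective ?_
  rintro (⟨i, j⟩ | _)
  · exact hg i j
  · choose M hM using hg
    refine ⟨(Matrix.of M).det⁻¹, ?_⟩
    have hdet : (algebraMap K L).mapMatrix (.of M) = g := by
      ext i j
      exact hM i j
    rw [map_inv₀, RingHom.map_det, hdet]
    simp [glCoords]

end FieldExtension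

section ZariskiClosure

theorem zariskiClosure_eq_zeroLocus {σ : Type} (Y : Set (σ → Qbar)) :
    zariskiClosure Y = zeroLocus Qbar (vanishingIdeal Qbar Y) := by
  ext a
  simp [zariskiClosure, zeroSet, mem_zeroLocus_iff, mem_vanishingIdeal_iff, aeval_eq_eval]

theorem zariskiClosure_subset_iff {σ : Type} {Y Z : Set (σ → Qbar)} :
    zariskiClosure Y ⊆ zariskiClosure Z ↔ Y ⊆ zariskiClosure Z := by
  simp only [zariskiClosure_eq_zeroLocus]
  exact ⟨(zeroLocus_vanishingIdeal_le Y).trans, fun h =>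
    zeroLocus_anti_mono <| (le_vanishingIdeal_zeroLocus _).trans (vanishingIdeal_anti_mono h)⟩

namespace ZariskiGL

variable {n : ℕ}

theorem glPoint_baseChange_mem_zariskiClosure_iff {s : Set (ZariskiGL n ℚ)} {g : ZariskiGL n ℚ} :
    glPoint (baseChange Qbar g) ∈ zariskiClosure (glPoint '' (baseChange Qbar '' s)) ↔
      g ∈ closure s := by
  have hcoords (h : ZariskiGL n ℚ) :
      glPoint (baseChange Qbar h) = algebraMap ℚ Qbar ∘ coords h := by
    rw [glPoint_eq_glCoords, glCoords_baseChange]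
  rw [mem_closure_iff, ← algebraMap_comp_mem_zeroLocus_vanishingIdeal_iff (L := Qbar),
    zariskiClosure_eq_zeroLocus, hcoords, Set.image_image, Set.image_image]
  simp only [hcoords]

theorem zariskiClosure_subset_zariskiClosure_iff {s t : Set (ZariskiGL n ℚ)} :
    zariskiClosure (glPoint '' (baseChange Qbar '' s)) ⊆
        zariskiClosure (glPoint '' (baseChange Qbar '' t)) ↔
      closure s ⊆ closure t := by
  rw [zariskiClosure_subset_iff, isClosed_closure.closure_subset_iff, Set.image_subset_iff,
    Set.image_subset_iff]
  exact forall₂_congr fun g _ => glPoint_baseChange_mem_zariskiClosure_iff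

theorem map_baseChange_comap_closure {S : Set (GL (Fin n) Qbar)}
    (hS : ∀ g ∈ S, HasRatEntries g) :
    ((Subgroup.closure S).comap (baseChange (K := ℚ) Qbar)).map (baseChange Qbar) =
      Subgroup.closure S := by
  refine Subgroup.map_comap_eq_self ((Subgroup.closure_le _).2 fun g hg => ?_)
  exact exists_baseChange_eq fun i j => (hS g hg i j).imp fun _ => Eq.symm

theorem strictMono_separateTopologicalClosure {ι : Type*} [Preorder ι]
    {H : ι → Subgroup (ZariskiGL n ℚ)}
    (hH : StrictMono fun i =>
      zariskiClosure (glPoint '' ((H i).map (baseChange Qbar) : Set (GL (Fin n) Qbar)))) :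
    StrictMono fun i => separateTopologicalClosure (H i) := fun _ _ hij =>
  SetLike.coe_ssubset_coe.1
    ⟨zariskiClosure_subset_zariskiClosure_iff.1 (hH hij).1,
      fun h => (hH hij).2 (zariskiClosure_subset_zariskiClosure_iff.2 h)⟩

end ZariskiGL

end ZariskiClosure

theorem stmt11_general (n ℓ : ℕ) (S : Fin ℓ → Set (GL (Fin n) Qbar))
    (hS : ∀ i, ∀ g ∈ S i, HasRatEntries g)
    (hmono : StrictMono fun i : Fin ℓ =>
      zariskiClosure (glPoint '' (Subgroup.closure (S i) : Set (GL (Fin n) Qbar)))) :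
    ℓ ≤ (3 * n ^ 2 + 1) * (n ^ 2 + 2) := by
  have hH : StrictMono fun i => separateTopologicalClosure
      ((Subgroup.closure (S i)).comap (ZariskiGL.baseChange (K := ℚ) Qbar)) :=
    ZariskiGL.strictMono_separateTopologicalClosure <| by
      simpa only [fun i => ZariskiGL.map_baseChange_comap_closure (hS i)] using hmono
  exact card_le_of_strictMono_of_relIndex_le ZariskiGL.topologicalKrullDim_le hH
    (fun _ => isClosed_closure) fun _ _ => ZariskiGL.relIndex_le_two_pow isClosed_closure

/-- **Chains of algebraic groups over ℚ**: there is an absolute constant `c` such that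
for all `n ≥ 1`, any strictly increasing chain `G₁ ⊊ ⋯ ⊊ G_ℓ` of Zariski closures of
groups generated by sets of rational matrices in `GL_n(ℚ̄)` has length
`ℓ ≤ exp⁴(n^c)`. -/
theorem stmt11 :
    ∃ c : ℕ, ∀ n : ℕ, 1 ≤ n → ∀ ℓ : ℕ, ∀ S : Fin ℓ → Set (GL (Fin n) Qbar),
      (∀ i, ∀ g ∈ S i, HasRatEntries g) →
      (StrictMono fun i : Fin ℓ =>
        zariskiClosure (glPoint '' (Subgroup.closure (S i) : Set (GL (Fin n) Qbar)))) →
      ℓ ≤ iexp 4 (n ^ c) := by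
  exact ⟨1, fun n _ ℓ S hS hmono => (stmt11_general n ℓ S hS hmono).trans <| by
    simpa only [pow_one] using mul_le_iexp_four n⟩
end
end
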